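/- Let n ≥ 1 and k = ⌈n/2⌉. Then the lattice-point counting functions of the dilates satisfy lim_{m→∞} |m·B_n(132,312) ∩ ℤ^{n×n}| / m^{binom(n,2)} = (∏_{i=1}^{n−1} (i−1)!) / (∏_{i=1}^{n−1} (2i−1)!), and lim_{m→∞} |m·B̃_n(123) ∩ ℤ^{n×n}| / m^{binom(k,2)} = 1 / ∏_{i=1}^{k−1} (2i−1)^{k−i}. Equivalently, the normalized volume of B_n(132,312) is binom(n,2)!·∏_{i=1}^{n−1}(i−1)!/∏_{i=1}^{n−1}(2i−1)!, and the normalized volume of B̃_n(123) is binom(k,2)!/∏_{i=1}^{k−1}(2i−1)^{k−i}. -/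

import Mathlib

open Pointwise

/-- `σ` contains the pattern `π`. -/
def containsPattern {n k : ℕ} (σ : Equiv.Perm (Fin n)) (π : Equiv.Perm (Fin k)) : Prop :=
  ∃ f : Fin k → Fin n, StrictMono f ∧ ∀ a b : Fin k, σ (f a) < σ (f b) ↔ π a < π b

/-- The pattern 123. -/
def p123 : Equiv.Perm (Fin 3) := 1
/-- The pattern 132. -/
def p132 : Equiv.Perm (Fin 3) := Equiv.swap 1 2
/-- The pattern 312. -/
def p312 : Equiv.Perm (Fin 3) := (finRotate 3)⁻¹

/-- `Av_n(132,312)`. -/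
def Av132312 (n : ℕ) : Set (Equiv.Perm (Fin n)) :=
  {σ : Equiv.Perm (Fin n) | ¬ containsPattern σ p132 ∧ ¬ containsPattern σ p312}

/-- `σ` is alternating (up-down): zero-based, `σ(j) < σ(j+1)` for even `j` and
`σ(j) > σ(j+1)` for odd `j`. -/
def Alternating {n : ℕ} (σ : Equiv.Perm (Fin n)) : Prop :=
  ∀ (j : ℕ) (h : j + 1 < n),
    (Even j → σ ⟨j, by omega⟩ < σ ⟨j + 1, h⟩) ∧
    (Odd j → σ ⟨j + 1, h⟩ < σ ⟨j, by omega⟩)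

/-- `AltAv_n(123)`: alternating permutations avoiding 123. -/
def AltAv123 (n : ℕ) : Set (Equiv.Perm (Fin n)) :=
  {σ : Equiv.Perm (Fin n) | Alternating σ ∧ ¬ containsPattern σ p123}

/-- The permutation matrix of `σ`, viewed as a vector in `ℝ^{n×n}`. -/
def permMatrix {n : ℕ} (σ : Equiv.Perm (Fin n)) : Fin n × Fin n → ℝ :=
  fun p => if σ p.1 = p.2 then 1 else 0

/-- `B_n(132,312)`. -/
def B132312 (n : ℕ) : Set (Fin n × Fin n → ℝ) :=
  convexHull ℝ (permMatrix '' Av132312 n)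

/-- `B̃_n(123)`. -/
def Balt123 (n : ℕ) : Set (Fin n × Fin n → ℝ) :=
  convexHull ℝ (permMatrix '' AltAv123 n)

namespace BP
variable {α : Type*} [DecidableEq α]

/-- bijective-type fillings: injective, strictly increasing along `R`, values in `1..m`. -/
def FSet (R : α → α → Prop) (I : Finset α) (m : ℕ) : Set (α → ℕ) :=
  {f | (∀ x, x ∉ I → f x = 0) ∧ (∀ x ∈ I, 1 ≤ f x ∧ f x ≤ m) ∧
    (∀ x ∈ I, ∀ y ∈ I, f x = f y → x = y) ∧ ∀ x ∈ I, ∀ y ∈ I, R x y → f x < f y}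

/-- antitone fillings with values in `0..m`. -/
def TSet (R : α → α → Prop) (D : Finset α) (m : ℕ) : Set (α → ℕ) :=
  {t | (∀ x, x ∉ D → t x = 0) ∧ (∀ x, t x ≤ m) ∧ ∀ x y, R x y → t y ≤ t x}

lemma bounded_finite (I : Finset α) (m : ℕ) :
    {f : α → ℕ | (∀ x, x ∉ I → f x = 0) ∧ ∀ x ∈ I, f x ≤ m}.Finite := by
  classical
  apply Set.Finite.of_finite_image (f := fun f => fun x : I => f x)
  · apply Set.Finite.subset (Set.Finite.pi (t := fun _ : I => Set.Iic m) (fun _ => Set.finite_Iic m))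
    rintro _ ⟨f, hf, rfl⟩
    intro x _
    exact hf.2 x x.2
  · intro f hf g hg h
    funext x
    by_cases hx : x ∈ I
    · exact congrFun h ⟨x, hx⟩
    · rw [hf.1 x hx, hg.1 x hx]

lemma FSet_finite (R : α → α → Prop) (I : Finset α) (m : ℕ) : (FSet R I m).Finite :=
  (bounded_finite I m).subset fun _ hf => ⟨hf.1, fun x hx => (hf.2.1 x hx).2⟩

lemma TSet_finite (R : α → α → Prop) (I : Finset α) (m : ℕ) : (TSet R I m).Finite :=
  (bounded_finite I m).subset fun _ hf => ⟨hf.1, fun x _ => hf.2.1 x⟩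

/-- `x` is `R`-maximal in `I`. -/
def MaxIn (R : α → α → Prop) (I : Finset α) (x : α) : Prop := ∀ y ∈ I, ¬ R x y

/-- `I` is `R`-lower. -/
def Low (R : α → α → Prop) (I : Finset α) : Prop := ∀ x y, R x y → y ∈ I → x ∈ I

lemma Low.erase {R : α → α → Prop} {I : Finset α} (h : Low R I) {x : α} (hx : MaxIn R I x) :
    Low R (I.erase x) := by
  intro a b hab hb
  rw [Finset.mem_erase] at hb ⊢
  refine ⟨?_, h a b hab hb.2⟩
  rintro rfl
  exact hx b hb.2 hab

open Classical in
lemma FSet_succ (R : α → α → Prop) (hR : ∀ x, ¬ R x x) (I : Finset α) (m : ℕ) :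
    (FSet R I (m+1)).ncard = (FSet R I m).ncard +
      ∑ x ∈ I with MaxIn R I x, (FSet R (I.erase x) m).ncard := by
  have key : FSet R I (m+1) = FSet R I m ∪
      ⋃ x ∈ I.filter (MaxIn R I), (fun f => Function.update f x (m+1)) '' FSet R (I.erase x) m := by
    ext f
    simp only [Set.mem_union, Set.mem_iUnion, Set.mem_image, Finset.mem_filter, exists_prop]
    constructor
    · intro hf
      by_cases h : ∃ x ∈ I, f x = m + 1
      · right
        obtain ⟨x, hx, hfx⟩ := h
        refine ⟨x, ⟨hx, ?_⟩, Function.update f x 0, ⟨?_, ?_, ?_, ?_⟩, ?_⟩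
        · intro y hy hxy
          have h1 := hf.2.2.2 x hx y hy hxy
          have h2 := (hf.2.1 y hy).2
          omega
        · intro y hy
          by_cases hyx : y = x
          · subst hyx; simp
          · rw [Function.update_of_ne hyx]
            exact hf.1 y (by simpa [hyx] using hy)
        · intro y hy
          rw [Finset.mem_erase] at hy
          rw [Function.update_of_ne hy.1]
          have h2 := hf.2.1 y hy.2
          have : f y ≠ m + 1 := fun h => hy.1 (hf.2.2.1 y hy.2 x hx (by omega))
          omega
        · intro a ha b hb
          rw [Finset.mem_erase] at ha hb
          rw [Function.update_of_ne ha.1, Function.update_of_ne hb.1]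
          exact hf.2.2.1 a ha.2 b hb.2
        · intro a ha b hb
          rw [Finset.mem_erase] at ha hb
          rw [Function.update_of_ne ha.1, Function.update_of_ne hb.1]
          exact hf.2.2.2 a ha.2 b hb.2
        · simp [← hfx]
      · left
        push Not at h
        refine ⟨hf.1, fun x hx => ?_, hf.2.2⟩
        have := hf.2.1 x hx
        have := h x hx
        omega
    · rintro (hf | ⟨x, ⟨hx, hmax⟩, g, hg, rfl⟩)
      · exact ⟨hf.1, fun x hx => ⟨(hf.2.1 x hx).1, (hf.2.1 x hx).2.trans (by omega)⟩, hf.2.2⟩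
      · have hv : ∀ y ∈ I, y ≠ x → 1 ≤ g y ∧ g y ≤ m := fun y hy hyx =>
          hg.2.1 y (Finset.mem_erase.2 ⟨hyx, hy⟩)
        refine ⟨?_, ?_, ?_, ?_⟩
        · intro y hy
          have : y ≠ x := fun h => hy (h ▸ hx)
          simp only [Function.update_of_ne this]
          exact hg.1 y (by simp [hy])
        · intro y hy
          by_cases hyx : y = x
          · subst hyx; simp
          · simp only [Function.update_of_ne hyx]
            have := hv y hy hyx
            omega
        · intro a ha b hb
          by_cases hax : a = x
          · by_cases hbx : b = x
            · intro _; rw [hax, hbx]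
            · subst hax
              simp only [Function.update_of_ne hbx, Function.update_self]
              have := hv b hb hbx
              intro h; omega
          · by_cases hbx : b = x
            · subst hbx
              simp only [Function.update_of_ne hax, Function.update_self]
              have := hv a ha hax
              intro h; omega
            · simp only [Function.update_of_ne hax, Function.update_of_ne hbx]
              exact hg.2.2.1 a (Finset.mem_erase.2 ⟨hax, ha⟩) b (Finset.mem_erase.2 ⟨hbx, hb⟩)
        · intro a ha b hb hab
          by_cases hax : a = x
          · subst hax
            exact absurd hab (hmax b hb)
          · by_cases hbx : b = x
            · subst hbx
              simp only [Function.update_of_ne hax, Function.update_self]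
              have := hv a ha hax
              omega
            · simp only [Function.update_of_ne hax, Function.update_of_ne hbx]
              exact hg.2.2.2 a (Finset.mem_erase.2 ⟨hax, ha⟩) b (Finset.mem_erase.2 ⟨hbx, hb⟩) hab
  rw [key, Set.ncard_union_eq ?_ ?_ ?_]
  · congr 1
    have hd : ∀ s : Finset α, s ⊆ I.filter (MaxIn R I) →
        (⋃ x ∈ s, (fun f => Function.update f x (m+1)) '' FSet R (I.erase x) m).ncard
        = ∑ x ∈ s, (FSet R (I.erase x) m).ncard := by
      intro s
      induction s using Finset.induction_on with
      | empty => simp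
      | insert a s ha ih =>
        intro hs
        rw [Finset.sum_insert ha, Finset.set_biUnion_insert, Set.ncard_union_eq ?_ ?_ ?_,
          ih ((Finset.subset_insert _ _).trans hs), Set.InjOn.ncard_image]
        · intro f hf g hg hfg
          funext y
          by_cases hy : y = a
          · subst hy
            rw [hf.1 y (by simp), hg.1 y (by simp)]
          · have := congrFun hfg y
            simpa [Function.update_of_ne hy] using this
        · rw [Set.disjoint_left]
          rintro _ ⟨f, hf, rfl⟩ hc
          simp only [Set.mem_iUnion, Set.mem_image, exists_prop] at hc
          obtain ⟨b, hb, g, hg, hgf⟩ := hc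
          have hab : a ≠ b := fun h => ha (h ▸ hb)
          have := congrFun hgf a
          simp only [Function.update_of_ne hab, Function.update_self] at this
          have haI : a ∈ I := (Finset.mem_filter.1 (hs (Finset.mem_insert_self _ _))).1
          have := hg.2.1 a (Finset.mem_erase.2 ⟨hab, haI⟩)
          omega
        · exact (FSet_finite _ _ _).image _
        · exact Set.Finite.biUnion (Finset.finite_toSet s) (fun x _ => (FSet_finite _ _ _).image _)
    exact hd _ (Finset.Subset.refl _)
  · rw [Set.disjoint_left]
    intro f hf hc
    simp only [Set.mem_iUnion, Set.mem_image, exists_prop, Finset.mem_filter] at hc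
    obtain ⟨b, hb, g, hg, rfl⟩ := hc
    have := (hf.2.1 b hb.1).2
    simp at this
  · exact FSet_finite _ _ _
  · exact Set.Finite.biUnion (Finset.finite_toSet _) (fun x _ => (FSet_finite _ _ _).image _)

open Classical in
/-- The weight recurrence. -/
def WRec (R : α → α → Prop) (D : Finset α) (w : Finset α → ℝ) : Prop :=
  w ∅ = 1 ∧ ∀ I, I ⊆ D → Low R I → (I.card : ℝ) * w I = ∑ x ∈ I with MaxIn R I x, w (I.erase x)

lemma FSet_card (R : α → α → Prop) (hR : ∀ x, ¬ R x x) (D : Finset α) (w : Finset α → ℝ)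
    (hw : WRec R D w) (m : ℕ) : ∀ I, I ⊆ D → Low R I →
    ((FSet R I m).ncard : ℝ) = (m.descFactorial I.card : ℝ) * w I := by
  classical
  induction m with
  | zero =>
    intro I hI hl
    rcases I.eq_empty_or_nonempty with rfl | ⟨x, hx⟩
    · have : FSet R (∅ : Finset α) 0 = {fun _ => 0} := by
        ext f
        simp [FSet, funext_iff]
      rw [this, hw.1]; simp
    · have : FSet R I 0 = ∅ := by
        ext f
        simp only [Set.mem_empty_iff_false, iff_false]
        intro hf
        have := hf.2.1 x hx
        omega
      rw [this]
      have h : 0 < I.card := Finset.card_pos.2 ⟨x, hx⟩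
      obtain ⟨k, hk⟩ := Nat.exists_eq_succ_of_ne_zero h.ne'
      rw [hk]; simp
  | succ m ih =>
    intro I hI hl
    rw [FSet_succ R hR]
    push_cast
    rw [ih I hI hl]
    have : ∑ x ∈ I with MaxIn R I x, ((FSet R (I.erase x) m).ncard : ℝ)
        = ∑ x ∈ I with MaxIn R I x, (m.descFactorial (I.card - 1) : ℝ) * w (I.erase x) := by
      apply Finset.sum_congr rfl
      intro x hx
      rw [Finset.mem_filter] at hx
      rw [ih _ ((Finset.erase_subset _ _).trans hI) (hl.erase hx.2), Finset.card_erase_of_mem hx.1]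
    rw [this, ← Finset.mul_sum]
    have h2 := hw.2 I hI hl
    rw [← h2]
    rcases Nat.eq_zero_or_pos I.card with h0 | h0
    · simp [h0]
    · obtain ⟨k, hk⟩ := Nat.exists_eq_succ_of_ne_zero h0.ne'
      rw [hk, Nat.succ_descFactorial_succ]
      rw [Nat.descFactorial_succ]
      simp only [Nat.succ_eq_add_one, Nat.add_sub_cancel]
      rcases le_or_gt k m with h | h
      · push_cast [Nat.cast_sub h]; ring
      · rw [Nat.descFactorial_of_lt h]; simp

/-- the injective members of `TSet`. -/
lemma TSet_inj_card (R : α → α → Prop) (hR : ∀ x, ¬ R x x) (D : Finset α) (hD : Low R D) (m : ℕ) :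
    {t ∈ TSet R D m | ∀ x ∈ D, ∀ y ∈ D, t x = t y → x = y}.ncard = (FSet R D (m+1)).ncard := by
  classical
  have : FSet R D (m+1) = (fun t x => if x ∈ D then m + 1 - t x else 0) ''
      {t ∈ TSet R D m | ∀ x ∈ D, ∀ y ∈ D, t x = t y → x = y} := by
    ext f
    constructor
    · intro hf
      refine ⟨fun x => if x ∈ D then m + 1 - f x else 0, ⟨⟨?_, ?_, ?_⟩, ?_⟩, ?_⟩
      · intro x hx; simp [hx]
      · intro x
        by_cases hx : x ∈ D
        · have := hf.2.1 x hx
          simp only [hx, if_true]; omega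
        · simp [hx]
      · intro x y hxy
        by_cases hy : y ∈ D
        · have hx := hD x y hxy hy
          have := hf.2.2.2 x hx y hy hxy
          simp only [hx, hy, if_true]; omega
        · simp [hy]
      · intro x hx y hy
        simp only [hx, hy, if_true]
        intro h
        have h1 := hf.2.1 x hx
        have h2 := hf.2.1 y hy
        exact hf.2.2.1 x hx y hy (by omega)
      · funext x
        by_cases hx : x ∈ D
        · have := hf.2.1 x hx
          simp only [hx, if_true]; omega
        · simp [hx, hf.1 x hx]
    · rintro ⟨t, ⟨ht, hinj⟩, rfl⟩
      refine ⟨?_, ?_, ?_, ?_⟩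
      · intro x hx; simp [hx]
      · intro x hx
        have := ht.2.1 x
        simp only [hx, if_true]; omega
      · intro x hx y hy
        have := ht.2.1 x
        have := ht.2.1 y
        simp only [hx, hy, if_true]
        intro h
        exact hinj x hx y hy (by omega)
      · intro x hx y hy hxy
        have := ht.2.1 x
        have := ht.2.1 y
        have h3 := ht.2.2 x y hxy
        have : t x ≠ t y := fun h => hR x (by have := hinj x hx y hy h; rwa [← this] at hxy)
        simp only [hx, hy, if_true]
        omega
  rw [this, Set.InjOn.ncard_image]
  intro t ht t' ht' h
  funext x
  by_cases hx : x ∈ D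
  · have := congrFun h x
    have h1 := ht.1.2.1 x
    have h2 := ht'.1.2.1 x
    simp only [hx, if_true] at this
    omega
  · rw [ht.1.1 x hx, ht'.1.1 x hx]

lemma TSet_noninj_card (R : α → α → Prop) (D : Finset α) (m : ℕ) :
    {t ∈ TSet R D m | ¬ ∀ x ∈ D, ∀ y ∈ D, t x = t y → x = y}.ncard + (m+1).descFactorial D.card
      ≤ (m+1) ^ D.card := by
  classical
  have h1 : {t ∈ TSet R D m | ¬ ∀ x ∈ D, ∀ y ∈ D, t x = t y → x = y}.ncard ≤
      ({g : D → Fin (m+1) | ¬ Function.Injective g}).ncard := by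
    apply Set.ncard_le_ncard_of_injOn (fun t x => Fin.ofNat (m+1) (t x))
    · intro t ht hinj
      apply ht.2
      intro x hx y hy hxy
      have := @hinj ⟨x, hx⟩ ⟨y, hy⟩ (by simp [hxy])
      simpa using this
    · intro t ht t' ht' h
      funext x
      by_cases hx : x ∈ D
      · have := congrFun h ⟨x, hx⟩
        have h1 := ht.1.2.1 x
        have h2 := ht'.1.2.1 x
        simp only [Fin.ext_iff, Fin.val_ofNat] at this
        rwa [Nat.mod_eq_of_lt (by omega), Nat.mod_eq_of_lt (by omega)] at this
      · rw [ht.1.1 x hx, ht'.1.1 x hx]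
  have h2 : ({g : D → Fin (m+1) | Function.Injective g}).ncard = (m+1).descFactorial D.card := by
    have := Fintype.card_embedding_eq (α := D) (β := Fin (m+1))
    rw [Fintype.card_fin, Fintype.card_coe] at this
    rw [← this, ← Nat.card_eq_fintype_card, ← Nat.card_coe_set_eq]
    exact Nat.card_congr (Equiv.subtypeInjectiveEquivEmbedding _ _)
  have h3 := Set.ncard_add_ncard_compl {g : D → Fin (m+1) | Function.Injective g}
  have h4 : Nat.card (D → Fin (m+1)) = (m+1)^D.card := by
    rw [Nat.card_eq_fintype_card]; simp
  rw [h4, h2] at h3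
  have h5 : ({g : D → Fin (m+1) | Function.Injective g})ᶜ = {g | ¬ Function.Injective g} := rfl
  rw [h5] at h3
  omega

lemma tendsto_succ_div : Filter.Tendsto (fun m : ℕ => ((m:ℝ) + 1) / m) Filter.atTop (nhds 1) := by
  have h : Filter.Tendsto (fun m : ℕ => 1 + 1 / (m:ℝ)) Filter.atTop (nhds (1 + 0)) :=
    tendsto_const_nhds.add tendsto_one_div_atTop_nhds_zero_nat
  rw [add_zero] at h
  refine h.congr' ?_
  filter_upwards [Filter.eventually_gt_atTop 0] with m hm
  have : (m:ℝ) ≠ 0 := by positivity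
  field_simp

lemma tendsto_desc (d : ℕ) : Filter.Tendsto
    (fun m : ℕ => ((m+1).descFactorial d : ℝ) / (m:ℝ)^d) Filter.atTop (nhds 1) := by
  induction d with
  | zero => simp
  | succ d ih =>
    have h : Filter.Tendsto (fun m : ℕ => 1 + (1 - (d:ℝ)) * (1 / (m:ℝ))) Filter.atTop
        (nhds (1 + (1 - (d:ℝ)) * 0)) :=
      tendsto_const_nhds.add (tendsto_one_div_atTop_nhds_zero_nat.const_mul _)
    have := h.mul ih
    simp only [mul_zero, add_zero, mul_one] at this
    refine this.congr' ?_
    filter_upwards [Filter.eventually_gt_atTop (d+1)] with m hm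
    have : (m:ℝ) ≠ 0 := by
      have : 0 < m := by omega
      positivity
    rw [Nat.descFactorial_succ]
    push_cast [Nat.cast_sub (show d ≤ m + 1 by omega)]
    field_simp
    ring

theorem TSet_tendsto (R : α → α → Prop) (hR : ∀ x, ¬ R x x) (D : Finset α) (hD : Low R D)
    (w : Finset α → ℝ) (hw : WRec R D w) :
    Filter.Tendsto (fun m : ℕ => ((TSet R D m).ncard : ℝ) / (m:ℝ) ^ D.card) Filter.atTop
      (nhds (w D)) := by
  have hpow : Filter.Tendsto (fun m : ℕ => ((m:ℝ) + 1)^D.card / (m:ℝ)^D.card) Filter.atTop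
      (nhds 1) := by
    have := tendsto_succ_div.pow D.card
    simpa [div_pow] using this
  have hlow : Filter.Tendsto (fun m : ℕ => ((m+1).descFactorial D.card : ℝ) / (m:ℝ)^D.card * w D)
      Filter.atTop (nhds (w D)) := by
    simpa using (tendsto_desc D.card).mul_const (w D)
  have hup := hlow.add (hpow.sub (tendsto_desc D.card))
  simp only [sub_self, add_zero] at hup
  have hbd : ∀ m : ℕ, ((m+1).descFactorial D.card : ℝ) * w D ≤ (TSet R D m).ncard ∧
      ((TSet R D m).ncard : ℝ) ≤ ((m+1).descFactorial D.card : ℝ) * w D +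
        (((m:ℝ)+1)^D.card - ((m+1).descFactorial D.card : ℝ)) := by
    intro m
    have h1 := FSet_card R hR D w hw (m+1) D (Finset.Subset.refl _) hD
    rw [← TSet_inj_card R hR D hD m] at h1
    have h2 := TSet_noninj_card R D m
    have h3 : (TSet R D m).ncard = {t ∈ TSet R D m | ∀ x ∈ D, ∀ y ∈ D, t x = t y → x = y}.ncard
       + {t ∈ TSet R D m | ¬ ∀ x ∈ D, ∀ y ∈ D, t x = t y → x = y}.ncard := by
      rw [← Set.ncard_union_eq ?_ ?_ ?_]
      · congr 1
        ext t
        simp only [Set.mem_union, Set.mem_ofPred_eq]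
        tauto
      · rw [Set.disjoint_left]
        intro t h h'
        exact h'.2 h.2
      · exact (TSet_finite R D m).subset fun t h => h.1
      · exact (TSet_finite R D m).subset fun t h => h.1
    have h2' : (({t ∈ TSet R D m | ¬ ∀ x ∈ D, ∀ y ∈ D, t x = t y → x = y}.ncard : ℕ) : ℝ)
      + ((m+1).descFactorial D.card : ℝ) ≤ ((m:ℝ)+1) ^ D.card := by exact_mod_cast h2
    rw [h3, ← h1]
    push_cast
    constructor
    · exact le_add_of_nonneg_right (Nat.cast_nonneg _)
    · linarith
  refine tendsto_of_tendsto_of_tendsto_of_le_of_le hlow hup ?_ ?_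
  · intro m
    have := (hbd m).1
    simp only
    rw [div_mul_eq_mul_div]
    gcongr
  · intro m
    have := (hbd m).2
    simp only
    rw [div_mul_eq_mul_div, ← sub_div, ← add_div]
    gcongr
end BP

open Pointwise
namespace BP

lemma TSet_sum_layers (t m : ℕ) (h : t ≤ m) :
    ∑ k ∈ Finset.range m, (if k < t then (1:ℝ) else 0) = t := by
  rw [← Finset.sum_filter]
  have : (Finset.range m).filter (fun k => k < t) = Finset.range t := by
    ext k; simp; omega
  rw [this]; simp

theorem ncard_lattice {α X : Type*} [DecidableEq α] [Fintype X] (R : α → α → Prop) (D : Finset α)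
    (V : Set (X → ℝ)) (M : (ℝ × (α → ℝ)) →ₗ[ℝ] (X → ℝ))
    (h1 : ∀ v ∈ V, ∃ t ∈ TSet R D 1, v = M (1, fun x => (t x : ℝ)))
    (h2 : ∀ t ∈ TSet R D 1, M (1, fun x => (t x : ℝ)) ∈ V)
    (h3 : ∀ (A : AddSubgroup ℝ) (a : ℝ) (t : α → ℝ), a ∈ A → (∀ x, x ∉ D → t x = 0) →
      (∀ p, M (a, t) p ∈ A) → ∀ x, t x ∈ A)
    (hV : ∀ v ∈ V, ∀ p, ∃ z : ℤ, v p = z) (m : ℕ) (hm : 0 < m) :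
    {x : X → ℤ | (fun p => (x p : ℝ)) ∈ (m : ℝ) • convexHull ℝ V}.ncard = (TSet R D m).ncard := by
  have hm' : (0:ℝ) < m := by exact_mod_cast hm
  have hinj : Set.InjOn (fun t : α → ℕ => M ((m:ℝ), fun x => (t x : ℝ))) (TSet R D m) := by
    intro t ht t' ht' h
    have h0 : M ((0:ℝ), fun x => (t x : ℝ) - t' x) = 0 := by
      have : ((0:ℝ), fun x => (t x : ℝ) - t' x) =
        ((m:ℝ), fun x => (t x : ℝ)) - ((m:ℝ), fun x => (t' x : ℝ)) := by
        ext <;> simp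
      rw [this, map_sub]
      exact sub_eq_zero.2 h
    have := h3 ⊥ 0 (fun x => (t x : ℝ) - t' x) (by simp)
      (fun x hx => by simp [ht.1 x hx, ht'.1 x hx]) (fun p => by rw [h0]; simp)
    funext x
    have := this x
    rw [AddSubgroup.mem_bot, sub_eq_zero] at this
    exact_mod_cast this
  have hcast : Function.Injective (fun (x : X → ℤ) (p : X) => (x p : ℝ)) := by
    intro x y h
    funext p
    have := congrFun h p
    simp only at this
    exact_mod_cast this
  rw [← Set.InjOn.ncard_image hinj, ← Set.ncard_image_of_injective _ hcast]
  congr 1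
  ext y
  constructor
  · rintro ⟨x, hx, rfl⟩
    simp only [Set.mem_ofPred_eq] at hx
    obtain ⟨z, hz, hzx⟩ := hx
    have hsub : convexHull ℝ V ⊆ {y | ∃ t : α → ℝ, (∀ x, x ∉ D → t x = 0) ∧ (∀ x, 0 ≤ t x ∧ t x ≤ 1) ∧
        (∀ x y, R x y → t y ≤ t x) ∧ y = M (1, t)} := by
      apply convexHull_min
      · intro v hv
        obtain ⟨t, ht, rfl⟩ := h1 v hv
        refine ⟨fun x => (t x : ℝ), fun x hx => by simp [ht.1 x hx], fun x => ⟨by positivity, ?_⟩,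
          fun x y hxy => ?_, rfl⟩
        · simp only; exact_mod_cast ht.2.1 x
        · simp only; exact_mod_cast ht.2.2 x y hxy
      · rintro _ ⟨t, a1, a2, a3, rfl⟩ _ ⟨t', b1, b2, b3, rfl⟩ a b ha hb hab
        refine ⟨fun x => a * t x + b * t' x, ?_, ?_, ?_, ?_⟩
        · intro x hx; simp [a1 x hx, b1 x hx]
        · intro x
          have h1 := a2 x
          have h2 := b2 x
          constructor
          · have := mul_nonneg ha h1.1
            have := mul_nonneg hb h2.1
            linarith
          · nlinarith
        · intro x y hxy
          have h1 := mul_le_mul_of_nonneg_left (a3 x y hxy) ha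
          have h2 := mul_le_mul_of_nonneg_left (b3 x y hxy) hb
          linarith
        · rw [← map_smul, ← map_smul, ← map_add]
          congr 1
          ext
          · simp [hab]
          · simp
    obtain ⟨t, t1, t2, t3, rfl⟩ := hsub hz
    have hzx' : M ((m:ℝ), fun x => (m:ℝ) * t x) = fun p => (x p : ℝ) := by
      rw [← hzx]
      simp only
      rw [← map_smul]
      congr 1
      ext <;> simp
    have hinteger := h3 (Int.castAddHom ℝ).range m (fun x => (m:ℝ) * t x) ⟨m, by simp⟩
      (fun x hx => by simp [t1 x hx]) (fun p => by rw [hzx']; exact ⟨x p, by simp⟩)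
    have hnat : ∀ x, ∃ k : ℕ, (k : ℝ) = m * t x := by
      intro x
      obtain ⟨z, hz⟩ := hinteger x
      have hz' : (z:ℝ) = m * t x := by simpa using hz
      have : (0:ℝ) ≤ z := by rw [hz']; exact mul_nonneg hm'.le (t2 x).1
      have : 0 ≤ z := by exact_mod_cast this
      lift z to ℕ using this
      exact ⟨z, by simpa using hz'⟩
    choose k hk using hnat
    refine ⟨k, ⟨?_, ?_, ?_⟩, ?_⟩
    · intro x hx
      have := hk x
      rw [t1 x hx] at this
      simpa using this
    · intro x
      have h := mul_le_mul_of_nonneg_left (t2 x).2 hm'.le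
      rw [← hk x, mul_one] at h
      exact_mod_cast h
    · intro x y hxy
      have h := mul_le_mul_of_nonneg_left (t3 x y hxy) hm'.le
      rw [← hk x, ← hk y] at h
      exact_mod_cast h
    · simp only [hk]
      exact hzx'
  · rintro ⟨t, ht, rfl⟩
    let l : ℕ → α → ℕ := fun k x => if k < t x then 1 else 0
    have hl : ∀ k, l k ∈ TSet R D 1 := by
      intro k
      refine ⟨fun x hx => by simp [l, ht.1 x hx], fun x => by simp only [l]; split_ifs <;> simp,
        fun x y hxy => ?_⟩
      have := ht.2.2 x y hxy
      simp only [l]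
      split_ifs <;> omega
    have hsum : M ((m:ℝ), fun x => (t x : ℝ)) = ∑ k ∈ Finset.range m, M (1, fun x => (l k x : ℝ)) := by
      rw [← map_sum]
      congr 1
      ext x
      · simp [Prod.fst_sum]
      · rw [Prod.snd_sum]
        simp only [Finset.sum_apply]
        rw [← TSet_sum_layers (t x) m (ht.2.1 x)]
        simp [l]
    have hc : (m:ℝ)⁻¹ • M ((m:ℝ), fun x => (t x : ℝ)) ∈ convexHull ℝ V := by
      rw [hsum, Finset.smul_sum]
      apply (convex_convexHull ℝ V).sum_mem
      · intro i _; positivity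
      · simp [hm'.ne']
      · intro i _
        exact subset_convexHull ℝ V (h2 _ (hl i))
    have hz : ∀ p, ∃ z : ℤ, M ((m:ℝ), fun x => (t x : ℝ)) p = z := by
      intro p
      have := fun k => hV _ (h2 _ (hl k)) p
      choose z hz using this
      refine ⟨∑ k ∈ Finset.range m, z k, ?_⟩
      rw [hsum, Finset.sum_apply]
      push_cast
      exact Finset.sum_congr rfl fun k _ => hz k
    choose z hz using hz
    refine ⟨z, ?_, ?_⟩
    · simp only [Set.mem_ofPred_eq]
      refine ⟨_, hc, ?_⟩
      funext p
      simp [← hz, hm'.ne']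
    · funext p
      exact (hz p).symm
end BP

namespace BP

/-- The staircase of cells. -/
def Stair (r : ℕ) : Finset (ℕ × ℕ) := (Finset.range r ×ˢ Finset.range r).filter fun x => x.1 + x.2 < r

lemma mem_Stair {r : ℕ} {x : ℕ × ℕ} : x ∈ Stair r ↔ x.1 + x.2 < r := by
  simp [Stair]; omega

lemma Stair_card (r : ℕ) : (Stair r).card = (r+1).choose 2 := by
  induction r with
  | zero => simp [Stair]
  | succ r ih =>
    have : Stair (r+1) = Stair r ∪ (Finset.HasAntidiagonal.antidiagonal r : Finset (ℕ × ℕ)) := by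
      ext x
      rw [Finset.mem_union, mem_Stair, mem_Stair, Finset.HasAntidiagonal.mem_antidiagonal]; omega
    rw [this, Finset.card_union_of_disjoint, ih, Finset.Nat.card_antidiagonal,
      Nat.choose_succ_succ' (r+1) 1]
    · simp; omega
    · rw [Finset.disjoint_left]
      intro x hx hx'
      rw [mem_Stair] at hx
      rw [Finset.HasAntidiagonal.mem_antidiagonal] at hx'
      omega

/-- Cover relation of the shifted staircase. -/
def R1 (x y : ℕ × ℕ) : Prop := (y.1 = x.1 ∧ y.2 = x.2 + 1) ∨ (y.1 = x.1 + 1 ∧ x.2 = y.2 + 1)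
/-- Cover relation of the ordinary staircase. -/
def R2 (x y : ℕ × ℕ) : Prop := (y.1 = x.1 ∧ y.2 = x.2 + 1) ∨ (y.1 = x.1 + 1 ∧ x.2 = y.2)

lemma R1_irrefl (x) : ¬ R1 x x := by unfold R1; omega
lemma R2_irrefl (x) : ¬ R2 x x := by unfold R2; omega
lemma low1 (r : ℕ) : Low R1 (Stair r) := by
  intro x y h; rw [mem_Stair, mem_Stair]; unfold R1 at h; omega
lemma low2 (r : ℕ) : Low R2 (Stair r) := by
  intro x y h; rw [mem_Stair, mem_Stair]; unfold R2 at h; omega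

/-- Length of a row. -/
def rl (I : Finset (ℕ × ℕ)) (c : ℕ) : ℕ := (I.filter fun x => x.1 = c).card

lemma rl_spec {I : Finset (ℕ × ℕ)} (h : ∀ c s, (c, s+1) ∈ I → (c, s) ∈ I) (c s : ℕ) :
    (c, s) ∈ I ↔ s < rl I c := by
  have hex : ∃ s, (c, s) ∉ I := by
    by_contra hcon
    push Not at hcon
    have : Set.Infinite (I : Set (ℕ × ℕ)) := by
      apply Set.infinite_of_injective_forall_mem (f := fun s : ℕ => (c, s))
      · intro a b h; simpa using h
      · intro s; exact hcon s
    exact this I.finite_toSet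
  classical
  have hmono : ∀ s t, s ≤ t → (c, t) ∈ I → (c, s) ∈ I := by
    intro s t hst
    induction hst with
    | refl => exact id
    | step _ ih => exact fun hh => ih (h _ _ hh)
  have hiff : ∀ s, (c, s) ∈ I ↔ s < Nat.find hex := by
    intro s
    rw [Nat.lt_find_iff]
    constructor
    · intro hs m hm
      simpa using hmono m s hm hs
    · intro hs
      simpa using hs s le_rfl
  have hcard : rl I c = Nat.find hex := by
    have : (I.filter fun x => x.1 = c) = (Finset.range (Nat.find hex)).image (fun s => (c, s)) := by
      ext ⟨a, b⟩
      simp only [Finset.mem_filter, Finset.mem_image, Finset.mem_range, Prod.mk.injEq]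
      constructor
      · rintro ⟨h1, rfl⟩
        exact ⟨b, (hiff b).1 h1, rfl, rfl⟩
      · rintro ⟨s, hs, rfl, rfl⟩
        exact ⟨(hiff _).2 hs, rfl⟩
    rw [rl, this, Finset.card_image_of_injective]
    · simp
    · intro a b h; simpa using h
  rw [hcard]; exact hiff s

lemma rl_erase {I : Finset (ℕ × ℕ)} {x : ℕ × ℕ} (hx : x ∈ I) :
    rl (I.erase x) = Function.update (rl I) x.1 (rl I x.1 - 1) := by
  funext c
  by_cases h : c = x.1
  · subst h
    rw [Function.update_self, rl, rl, Finset.filter_erase, Finset.card_erase_of_mem]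
    simp [hx]
  · rw [Function.update_of_ne h, rl, rl, Finset.filter_erase, Finset.erase_eq_of_notMem]
    simp [Ne.symm h]

lemma sum_rl {r : ℕ} {I : Finset (ℕ × ℕ)} (hI : I ⊆ Stair r) :
    I.card = ∑ c ∈ Finset.range r, rl I c := by
  apply Finset.card_eq_sum_card_fiberwise
  intro x hx
  have := mem_Stair.1 (hI hx)
  simp; omega

lemma rl_Stair (r c : ℕ) : rl (Stair r) c = r - c := by
  have h := rl_spec (I := Stair r) (fun c s h => by rw [mem_Stair] at *; simp at *; omega) c
  have h1 := h (rl (Stair r) c)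
  have h2 := h (r - c)
  have h3 := h (rl (Stair r) c - 1)
  rw [mem_Stair] at h1 h2 h3
  simp only at h1 h2 h3
  omega

open Classical in
lemma sum_max {r : ℕ} {R : ℕ × ℕ → ℕ × ℕ → Prop} (hR : ∀ c s, R (c, s) (c, s+1))
    {I : Finset (ℕ × ℕ)} (hI : I ⊆ Stair r) (hl : Low R I) (φ : ℕ → ℝ)
    (hφ : ∀ c < r, (rl I c = 0 ∨ ¬ MaxIn R I (c, rl I c - 1)) → φ c = 0) :
    ∑ x ∈ I with MaxIn R I x, φ x.1 = ∑ c ∈ Finset.range r, φ c := by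
  have hs := rl_spec (I := I) (fun c s h => hl _ _ (hR c s) h)
  rw [← Finset.sum_filter_of_ne (s := Finset.range r)
    (p := fun c => rl I c ≠ 0 ∧ MaxIn R I (c, rl I c - 1))]
  · apply Finset.sum_bij (fun x _ => x.1)
    · intro x hx
      rw [Finset.mem_filter] at hx
      have h1 : x = (x.1, rl I x.1 - 1) := by
        have h1 := (hs x.1 x.2).1 hx.1
        have h2 : ¬ (x.1, x.2 + 1) ∈ I := fun h => hx.2 _ h (hR _ _)
        rw [hs] at h2
        ext <;> simp; omega
      have h2 := (hs x.1 x.2).1 hx.1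
      rw [Finset.mem_filter, Finset.mem_range]
      refine ⟨by have := mem_Stair.1 (hI hx.1); omega, by omega, h1 ▸ hx.2⟩
    · intro x hx y hy hxy
      rw [Finset.mem_filter] at hx hy
      have a1 := (hs x.1 x.2).1 hx.1
      have a2 : ¬ (x.1, x.2 + 1) ∈ I := fun h => hx.2 _ h (hR _ _)
      have b1 := (hs y.1 y.2).1 hy.1
      have b2 : ¬ (y.1, y.2 + 1) ∈ I := fun h => hy.2 _ h (hR _ _)
      rw [hs] at a2 b2
      rw [hxy] at a1 a2
      ext
      · exact hxy
      · omega
    · intro c hc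
      rw [Finset.mem_filter] at hc
      refine ⟨(c, rl I c - 1), ?_, rfl⟩
      rw [Finset.mem_filter]
      refine ⟨(hs _ _).2 (by omega), hc.2.2⟩
    · intros; rfl
  · intro c hc hne
    by_contra hcon
    apply hne
    apply hφ c (Finset.mem_range.1 hc)
    tauto

/-- Pair products. -/
noncomputable def PP (κ : ℕ → ℕ → ℝ) (s : Finset ℕ) : ℝ :=
  ∏ a ∈ s, ∏ b ∈ s, if a < b then κ a b else 1

lemma PP_insert (κ : ℕ → ℕ → ℝ) (hκ : ∀ a b, κ a b = κ b a) {s : Finset ℕ} {c : ℕ} (hc : c ∉ s) :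
    PP κ (insert c s) = PP κ s * ∏ d ∈ s, κ c d := by
  unfold PP
  simp only [Finset.prod_insert hc, lt_irrefl, if_false, one_mul, Finset.prod_mul_distrib]
  rw [← mul_assoc, ← Finset.prod_mul_distrib, mul_comm]
  congr 1
  apply Finset.prod_congr rfl
  intro d hd
  have : c ≠ d := fun h => hc (h ▸ hd)
  rcases lt_or_gt_of_ne this with h | h
  · simp [h, h.not_gt]
  · simp [h, h.not_gt, hκ c d]

lemma PP_congr {κ κ' : ℕ → ℕ → ℝ} {s : Finset ℕ} (h : ∀ a ∈ s, ∀ b ∈ s, κ a b = κ' a b) :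
    PP κ s = PP κ' s := by
  unfold PP
  apply Finset.prod_congr rfl
  intro a ha
  apply Finset.prod_congr rfl
  intro b hb
  rw [h a ha b hb]

/-- The kernel `|a-b|/(a+b)`. -/
noncomputable def rho (a b : ℕ) : ℝ := if a = 0 ∧ b = 0 then 1 else |(a:ℝ) - b| / (a + b)

lemma rho_comm (a b : ℕ) : rho a b = rho b a := by
  unfold rho
  simp only [and_comm (a := a = 0), abs_sub_comm (a:ℝ), add_comm (a:ℝ)]

lemma rho_zero (a : ℕ) : rho a 0 = 1 := by
  unfold rho
  by_cases h : a = 0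
  · simp [h]
  · simp [h]

lemma rho_pos (a b : ℕ) (hb : 0 < b) : rho a b = |(a:ℝ) - b| / (a + b) := by
  unfold rho
  rw [if_neg]; omega

/-- Shifted weight. -/
noncomputable def W1 (r : ℕ) (l : ℕ → ℕ) : ℝ :=
  (∏ c ∈ Finset.range r, ((l c).factorial : ℝ)⁻¹) * PP (fun c d => rho (l c) (l d)) (Finset.range r)

lemma lagrange_id (s : Finset ℕ) (x y : ℕ → ℝ) (hy : Set.InjOn y s) :
    ∑ c ∈ s, (∏ d ∈ s, (y c - x d)) / (∏ d ∈ s.erase c, (y c - y d)) = ∑ c ∈ s, (y c - x c) := by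
  rcases s.eq_empty_or_nonempty with rfl | hne
  · simp
  open Polynomial in
  have hdeg : (∏ d ∈ s, (X - C (x d)) - ∏ d ∈ s, (X - C (y d)) : ℝ[X]).degree < s.card := by
    have h1 : (∏ d ∈ s, (X - C (x d)) : ℝ[X]).degree = s.card := by
      rw [degree_prod]; simp
    have h2 : (∏ d ∈ s, (X - C (y d)) : ℝ[X]).degree = s.card := by
      rw [degree_prod]; simp
    rw [← h1]
    apply degree_sub_lt_left (h1.trans h2.symm)
    · exact (monic_prod_of_monic _ _ fun i _ => monic_X_sub_C _).ne_zero
    · rw [(monic_prod_of_monic _ _ fun i _ => monic_X_sub_C _).leadingCoeff,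
        (monic_prod_of_monic _ _ fun i _ => monic_X_sub_C _).leadingCoeff]
  have h := Lagrange.coeff_eq_sum hy hdeg
  rw [Polynomial.coeff_sub, Polynomial.prod_X_sub_C_coeff_card_pred _ _ hne.card_pos,
    Polynomial.prod_X_sub_C_coeff_card_pred _ _ hne.card_pos] at h
  rw [Finset.sum_sub_distrib]
  have h' : (-∑ i ∈ s, x i - -∑ i ∈ s, y i) = ∑ i ∈ s, y i - ∑ i ∈ s, x i := by ring
  rw [← h', h]
  apply Finset.sum_congr rfl
  intro c hc
  rw [Polynomial.eval_sub, Polynomial.eval_prod, Polynomial.eval_prod]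
  simp only [Polynomial.eval_sub, Polynomial.eval_X, Polynomial.eval_C]
  rw [Finset.prod_eq_zero (f := fun d => y c - y d) hc (by simp), sub_zero]

lemma W1_step (r : ℕ) (l : ℕ → ℕ) (hl : ∀ c d, c < r → d < r → c ≠ d → 0 < l c → l c ≠ l d)
    (c : ℕ) (hc : c < r) (hlc : 0 < l c) :
    W1 r (Function.update l c (l c - 1)) = W1 r l * (l c * ∏ d ∈ ((Finset.range r).filter (fun d => 0 < l d)).erase c,
      (((l c : ℝ) * (l c - 1) - l d * (l d + 1)) / ((l c : ℝ) * (l c - 1) - l d * (l d - 1)))) := by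
  set s := (Finset.range r).erase c with hs
  have hcs : c ∉ s := by simp [hs]
  have hr : Finset.range r = insert c s := by rw [hs, Finset.insert_erase]; simpa using hc
  have hfac : ((l c - 1).factorial : ℝ)⁻¹ = ((l c).factorial : ℝ)⁻¹ * l c := by
    obtain ⟨k, hk⟩ := Nat.exists_eq_succ_of_ne_zero hlc.ne'
    rw [hk, Nat.factorial_succ]
    push_cast
    have : ((k.factorial : ℕ) : ℝ) ≠ 0 := by positivity
    have : ((k : ℝ) + 1) ≠ 0 := by positivity
    field_simp
  have hne : ∀ d ∈ s, d ≠ c := fun d hd h => hcs (h ▸ hd)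
  have hkey : ∏ d ∈ s, rho (l c - 1) (l d) = (∏ d ∈ s, rho (l c) (l d)) *
      ∏ d ∈ ((Finset.range r).filter (fun d => 0 < l d)).erase c,
      (((l c : ℝ) * (l c - 1) - l d * (l d + 1)) / ((l c : ℝ) * (l c - 1) - l d * (l d - 1))) := by
    rw [← Finset.filter_erase, ← hs, Finset.prod_filter, ← Finset.prod_mul_distrib]
    apply Finset.prod_congr rfl
    intro d hd
    split_ifs with hld
    · rw [rho_pos _ _ hld, rho_pos _ _ hld]
      have hdr : d < r := by
        rw [hs] at hd; simpa using (Finset.mem_of_mem_erase hd)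
      have hne := hl c d hc hdr (hne d hd).symm hlc
      have e1 : ((l c - 1 : ℕ) : ℝ) = (l c : ℝ) - 1 := by push_cast [Nat.cast_sub hlc]; ring
      rw [e1]
      have a1 : (1:ℝ) ≤ l c := by exact_mod_cast hlc
      have a2 : (1:ℝ) ≤ l d := by exact_mod_cast hld
      have e2 : (l c : ℝ) * (l c - 1) - l d * (l d + 1) = (l c - 1 - l d) * (l c + l d) := by ring
      have e3 : (l c : ℝ) * (l c - 1) - l d * (l d - 1) = (l c - l d) * (l c - 1 + l d) := by ring
      rw [e2, e3]
      have p1 : (l c : ℝ) + l d ≠ 0 := by positivity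
      have p2 : (l c : ℝ) - 1 + l d ≠ 0 := by
        have : (0:ℝ) < (l c : ℝ) - 1 + l d := by linarith
        exact this.ne'
      have p3 : (l c : ℝ) - l d ≠ 0 := by
        rw [sub_ne_zero]; exact_mod_cast hne
      rcases lt_or_gt_of_ne hne with h | h
      · have h' : (l c : ℝ) < l d := by exact_mod_cast h
        rw [abs_of_neg (by linarith), abs_of_neg (by linarith)]
        field_simp
      · have h' : (l d : ℝ) + 1 ≤ l c := by exact_mod_cast h
        rw [abs_of_nonneg (by linarith), abs_of_nonneg (by linarith)]
        field_simp
    · have : l d = 0 := by omega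
      rw [this, rho_zero, rho_zero]; simp
  unfold W1
  have hsym : ∀ l : ℕ → ℕ, ∀ a b, (fun c d => rho (l c) (l d)) a b = (fun c d => rho (l c) (l d)) b a :=
    fun l a b => rho_comm _ _
  have e1 : PP (fun c' d => rho (Function.update l c (l c - 1) c') (Function.update l c (l c - 1) d))
      (Finset.range r) = PP (fun c d => rho (l c) (l d)) s * ∏ d ∈ s, rho (l c - 1) (l d) := by
    rw [hr, PP_insert _ (hsym _) hcs]
    congr 1
    · apply PP_congr
      intro a ha b hb
      simp only [Function.update_of_ne (hne a ha), Function.update_of_ne (hne b hb)]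
    · apply Finset.prod_congr rfl
      intro d hd
      simp only [Function.update_of_ne (hne d hd), Function.update_self]
  have e2 : PP (fun c d => rho (l c) (l d)) (Finset.range r) =
      PP (fun c d => rho (l c) (l d)) s * ∏ d ∈ s, rho (l c) (l d) := by
    rw [hr, PP_insert _ (hsym _) hcs]
  have e3 : ∏ c' ∈ Finset.range r, ((Function.update l c (l c - 1) c').factorial : ℝ)⁻¹
      = (∏ c' ∈ Finset.range r, ((l c').factorial : ℝ)⁻¹) * l c := by
    rw [hr, Finset.prod_insert hcs, Finset.prod_insert hcs, Function.update_self, hfac]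
    have : ∏ d ∈ s, ((Function.update l c (l c - 1) d).factorial : ℝ)⁻¹ = ∏ d ∈ s, ((l d).factorial : ℝ)⁻¹ := by
      apply Finset.prod_congr rfl
      intro d hd
      rw [Function.update_of_ne (hne d hd)]
    rw [this]; ring
  rw [e1, e2, e3, hkey]
  ring

lemma W1_sum (r : ℕ) (l : ℕ → ℕ) (hl : ∀ c d, c < r → d < r → c ≠ d → 0 < l c → l c ≠ l d) :
    ∑ c ∈ (Finset.range r).filter (fun d => 0 < l d), W1 r (Function.update l c (l c - 1)) =
      ((∑ c ∈ Finset.range r, l c : ℕ) : ℝ) * W1 r l := by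
  set K := (Finset.range r).filter (fun d => 0 < l d) with hK
  have hy : Set.InjOn (fun d => (l d : ℝ) * (l d - 1)) K := by
    intro c hc d hd h
    simp only [hK, Finset.coe_filter, Finset.mem_range, Set.mem_ofPred_eq] at hc hd
    by_contra hcd
    have hne := hl c d hc.1 hd.1 hcd hc.2
    have hne' : (l c : ℝ) - l d ≠ 0 := by
      rw [sub_ne_zero]; exact_mod_cast hne
    have h2 : ((l c : ℝ) - l d) * (l c + l d - 1) = 0 := by
      simp only at h
      linear_combination h
    rcases mul_eq_zero.1 h2 with h3 | h3
    · exact hne' h3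
    · have h4 : (l c : ℝ) + l d = 1 := by linarith
      have h5 : l c + l d = 1 := by exact_mod_cast h4
      omega
  have h := lagrange_id K (fun d => (l d : ℝ) * (l d + 1)) _ hy
  have h2 : ∑ c ∈ K, ((l c : ℝ) * (l c - 1) - (l c : ℝ) * (l c + 1)) = -2 * ∑ c ∈ K, (l c : ℝ) := by
    rw [Finset.mul_sum]
    apply Finset.sum_congr rfl
    intros; ring
  rw [h2] at h
  have h3 : ∑ c ∈ K, (∏ d ∈ K, ((l c : ℝ) * (l c - 1) - (l d : ℝ) * (l d + 1))) /
      (∏ d ∈ K.erase c, ((l c : ℝ) * (l c - 1) - (l d : ℝ) * (l d - 1))) =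
      -2 * ∑ c ∈ K, ((l c : ℝ) * ∏ d ∈ K.erase c,
      (((l c : ℝ) * (l c - 1) - l d * (l d + 1)) / ((l c : ℝ) * (l c - 1) - l d * (l d - 1)))) := by
    rw [Finset.mul_sum]
    apply Finset.sum_congr rfl
    intro c hc
    rw [← Finset.mul_prod_erase K _ hc, Finset.prod_div_distrib]
    ring
  rw [h3] at h
  have h4 : ∑ c ∈ K, (l c : ℝ) = ((∑ c ∈ Finset.range r, l c : ℕ) : ℝ) := by
    push_cast
    rw [hK]
    apply Finset.sum_filter_of_ne
    intro c _ hc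
    have : l c ≠ 0 := by exact_mod_cast hc
    omega
  rw [h4] at h
  have h5 := mul_left_cancel₀ (by norm_num) h
  rw [← h5, mul_comm, Finset.mul_sum]
  apply Finset.sum_congr rfl
  intro c hc
  rw [hK, Finset.mem_filter, Finset.mem_range] at hc
  exact W1_step r l hl c hc.1 hc.2

lemma W1_rec (r : ℕ) : WRec R1 (Stair r) (fun I => W1 r (rl I)) := by
  constructor
  · have : rl ∅ = fun _ => 0 := by funext c; simp [rl]
    simp [this, W1, PP, rho]
  · intro I hI hl
    have hs := rl_spec (I := I) (fun c s h => hl (c, s) (c, s+1) (Or.inl ⟨rfl, rfl⟩) h)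
    have hstep : ∀ c, 0 < rl I (c+1) → rl I (c+1) < rl I c := by
      intro c hc
      have h1 : (c+1, rl I (c+1) - 1) ∈ I := (hs _ _).2 (by omega)
      have h2 : (c, rl I (c+1)) ∈ I := hl (c, rl I (c+1)) _ (Or.inr ⟨rfl, by simp; omega⟩) h1
      exact (hs _ _).1 h2
    have hdec : ∀ c k, 0 < rl I (c+k+1) → rl I (c+k+1) < rl I c := by
      intro c k
      induction k with
      | zero => exact hstep c
      | succ k ih =>
        intro h
        have h1 := hstep _ h
        have := ih (by simpa [add_assoc] using lt_of_le_of_lt (Nat.zero_le _) h1)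
        have h1' : rl I (c + (k+1) + 1) < rl I (c + k + 1) := h1
        omega
    have hlt : ∀ c d, c < d → 0 < rl I d → rl I d < rl I c := by
      intro c d h
      obtain ⟨k, rfl⟩ := Nat.exists_eq_add_of_lt h
      exact hdec c k
    have hdist : ∀ c d, c < r → d < r → c ≠ d → 0 < rl I c → rl I c ≠ rl I d := by
      intro c d _ _ hcd h0 heq
      rcases lt_or_gt_of_ne hcd with h | h
      · have := hlt c d h (by omega); omega
      · have := hlt d c h (by omega); omega
    have hW := W1_sum r (rl I) hdist
    simp only
    rw [sum_rl hI, ← hW]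
    classical
    have e1 : ∑ x ∈ I with MaxIn R1 I x, W1 r (rl (I.erase x)) =
       ∑ x ∈ I with MaxIn R1 I x, (fun c => if 0 < rl I c then W1 r (Function.update (rl I) c (rl I c - 1)) else 0) x.1 := by
      apply Finset.sum_congr rfl
      intro x hx
      rw [Finset.mem_filter] at hx
      rw [rl_erase hx.1]
      have := (hs x.1 x.2).1 hx.1
      simp only
      rw [if_pos (by omega)]
    rw [Finset.sum_filter]
    symm
    convert e1.trans ?_ using 1
    refine sum_max (fun c s => Or.inl ⟨rfl, rfl⟩) hI hl (fun c => if 0 < rl I c then W1 r (Function.update (rl I) c (rl I c - 1)) else 0) ?_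
    intro c hc h
    split_ifs with h0
    · rcases h with h | h
      · omega
      · unfold MaxIn at h
        push Not at h
        obtain ⟨y, hy, hxy⟩ := h
        rcases hxy with ⟨a, b⟩ | ⟨a, b⟩
        · have := (hs y.1 y.2).1 hy
          simp only at a b
          rw [a] at this
          omega
        · simp only at a b
          have h1 := (hs y.1 y.2).1 hy
          have h2 := hstep c (by rw [← a]; omega)
          rw [a] at h1
          have h3 : rl I (c+1) = rl I c - 1 := by omega
          have hc1 : c + 1 < r := by
            have := mem_Stair.1 (hI hy); omega
          rw [W1_step r (rl I) hdist c hc h0, Finset.prod_eq_zero (i := c+1)]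
          · simp
          · simp [hc1]; omega
          · rw [h3]
            push_cast [Nat.cast_sub (show 1 ≤ rl I c from h0)]
            ring_nf

    · rfl

lemma rho_prod (r : ℕ) : ∏ d ∈ Finset.range r, rho (r + 1) (d+1) =
    ((r.factorial : ℝ) * (r+1).factorial) / (2 * r + 1).factorial := by
  have h1 : ∀ d ∈ Finset.range r, rho (r+1) (d+1) = ((r - d : ℕ) : ℝ) / ((r + 1 + (d+1) : ℕ) : ℝ) := by
    intro d hd
    rw [Finset.mem_range] at hd
    rw [rho_pos _ _ (by omega)]
    push_cast [Nat.cast_sub hd.le]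
    rw [abs_of_pos]
    · ring
    · have : (d:ℝ) < r := by exact_mod_cast hd
      linarith
  rw [Finset.prod_congr rfl h1, Finset.prod_div_distrib, ← Nat.cast_prod, ← Nat.cast_prod]
  have h2 : ∏ d ∈ Finset.range r, (r - d) = r.factorial := by
    rw [← Nat.descFactorial_self, Nat.descFactorial_eq_prod_range]
  have h3 : (r+1).factorial * ∏ d ∈ Finset.range r, (r + 1 + (d + 1)) = (2*r+1).factorial := by
    have := Nat.factorial_mul_ascFactorial (r+1) r
    rw [Nat.ascFactorial_eq_prod_range] at this
    rw [show 2 * r + 1 = r + 1 + r by ring, ← this]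
    congr 1
    apply Finset.prod_congr rfl; intros; ring
  rw [h2, ← h3]
  have : (((r+1).factorial : ℕ) : ℝ) ≠ 0 := by positivity
  have h4 : ((∏ d ∈ Finset.range r, (r + 1 + (d + 1)) : ℕ) : ℝ) ≠ 0 := by
    rw [Nat.cast_ne_zero, Finset.prod_ne_zero_iff]; intros; omega
  push_cast at h4 ⊢
  field_simp

lemma W1_reindex (r : ℕ) : W1 r (fun c => r - c) = W1 r (fun c => c + 1) := by
  unfold W1
  congr 1
  · rw [← Finset.prod_range_reflect]
    apply Finset.prod_congr rfl
    intro c hc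
    rw [Finset.mem_range] at hc
    simp only [show r - (r - 1 - c) = c + 1 by omega]
  · unfold PP
    rw [← Finset.prod_range_reflect]
    have : ∀ a ∈ Finset.range r, ∏ b ∈ Finset.range r, (if r - 1 - a < b then rho (r - (r - 1 - a)) (r - b) else 1)
       = ∏ b ∈ Finset.range r, (if b < a then rho (a + 1) (b + 1) else 1) := by
      intro a ha
      rw [Finset.mem_range] at ha
      rw [← Finset.prod_range_reflect]
      apply Finset.prod_congr rfl
      intro b hb
      rw [Finset.mem_range] at hb
      rw [show r - (r - 1 - a) = a + 1 by omega, show r - (r - 1 - b) = b + 1 by omega]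
      congr 1
      rw [eq_iff_iff]; omega
    rw [Finset.prod_congr rfl this, Finset.prod_comm]
    simp only [rho_comm]

lemma W1_eval (r : ℕ) : W1 r (rl (Stair r)) =
    (∏ i ∈ Finset.Icc 1 r, (Nat.factorial (i - 1) : ℝ)) /
        (∏ i ∈ Finset.Icc 1 r, (Nat.factorial (2 * i - 1) : ℝ)) := by
  have : rl (Stair r) = fun c => r - c := funext fun c => rl_Stair r c
  rw [this, W1_reindex]
  induction r with
  | zero => simp [W1, PP]
  | succ r ih =>
    rw [Finset.prod_Icc_succ_top (by omega), Finset.prod_Icc_succ_top (by omega)]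
    have e : W1 (r+1) (fun c => c + 1) = W1 r (fun c => c+1) *
        (((r+1).factorial : ℝ)⁻¹ * ∏ d ∈ Finset.range r, rho (r+1) (d+1)) := by
      unfold W1
      rw [Finset.prod_range_succ, Finset.range_add_one, PP_insert _ (fun a b => rho_comm _ _) (by simp)]
      ring
    rw [e, ih (funext fun c => rl_Stair r c), rho_prod]
    rw [show 2 * (r+1) - 1 = 2 * r + 1 by omega, show r + 1 - 1 = r by omega]
    have : (((r+1).factorial : ℕ) : ℝ) ≠ 0 := by positivity
    field_simp
end BP

namespace BP

/-- `1/z!`, zero for negative `z`. -/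
noncomputable def bf (z : ℤ) : ℝ := if 0 ≤ z then ((z.toNat.factorial : ℝ))⁻¹ else 0

lemma bf_neg {z : ℤ} (h : z < 0) : bf z = 0 := by
  unfold bf; rw [if_neg (by omega)]

lemma bf_nat (k : ℕ) : bf k = ((k.factorial : ℝ))⁻¹ := by simp [bf]

lemma bf_sub_one (z : ℤ) : bf (z - 1) = z * bf z := by
  rcases lt_trichotomy z 0 with h | h | h
  · rw [bf_neg h, bf_neg (by omega)]; simp
  · subst h; rw [bf_neg (by omega)]; simp
  · obtain ⟨k, rfl⟩ : ∃ k : ℕ, z = k + 1 := ⟨(z - 1).toNat, by omega⟩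
    rw [show (k : ℤ) + 1 - 1 = k by ring, bf_nat, show (k : ℤ) + 1 = ((k + 1 : ℕ) : ℤ) by simp, bf_nat,
      Nat.factorial_succ]
    push_cast
    have : ((k.factorial : ℕ) : ℝ) ≠ 0 := by positivity
    have : ((k : ℝ) + 1) ≠ 0 := by positivity
    field_simp

/-- The determinantal weight. -/
noncomputable def W2 (r : ℕ) (l : ℕ → ℤ) : ℝ :=
  Matrix.det (Matrix.of fun i j : Fin r => bf (l (r - 1 - i) + i - j))

lemma W2_sum (r : ℕ) (l : ℕ → ℤ) :
    ∑ c ∈ Finset.range r, W2 r (Function.update l c (l c - 1)) =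
      ((∑ c ∈ Finset.range r, l c : ℤ) : ℝ) * W2 r l := by
  have h1 : ∀ i : Fin r, W2 r (Function.update l (r - 1 - i) (l (r - 1 - i) - 1)) =
      ∑ σ : Equiv.Perm (Fin r), ((Equiv.Perm.sign σ : ℤ) : ℝ) *
        ((∏ k : Fin r, bf (l (r - 1 - k) + k - σ k)) * ((l (r - 1 - i) + i - σ i : ℤ) : ℝ)) := by
    intro i
    unfold W2
    rw [← Matrix.det_transpose, Matrix.det_apply']
    apply Finset.sum_congr rfl
    intro σ _
    congr 1
    rw [← Finset.mul_prod_erase _ _ (Finset.mem_univ i), ← Finset.mul_prod_erase _ _ (Finset.mem_univ i)]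
    have : ∏ x ∈ Finset.univ.erase i, (Matrix.of fun i_1 j : Fin r =>
        bf (Function.update l (r - 1 - i) (l (r - 1 - i) - 1) (r - 1 - i_1) + i_1 - j)).transpose (σ x) x =
        ∏ k ∈ Finset.univ.erase i, bf (l (r - 1 - k) + k - σ k) := by
      apply Finset.prod_congr rfl
      intro k hk
      have hne : k ≠ i := (Finset.mem_erase.1 hk).1
      have : r - 1 - (k:ℕ) ≠ r - 1 - i := by
        intro h; apply hne; ext; omega
      simp [Function.update_of_ne this]
    rw [this]
    simp only [Matrix.transpose_apply, Matrix.of_apply, Function.update_self]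
    rw [show l (r - 1 - i) - 1 + (i:ℕ) - (σ i : ℕ) = (l (r - 1 - i) + (i:ℕ) - (σ i : ℕ)) - 1 by ring, bf_sub_one]
    ring
  have h2 : ∑ c ∈ Finset.range r, W2 r (Function.update l c (l c - 1)) =
      ∑ i : Fin r, W2 r (Function.update l (r - 1 - i) (l (r - 1 - i) - 1)) := by
    rw [← Finset.sum_range_reflect, Finset.sum_range]
  rw [h2, Finset.sum_congr rfl (fun i _ => h1 i), Finset.sum_comm]
  have h3 : W2 r l = ∑ σ : Equiv.Perm (Fin r), ((Equiv.Perm.sign σ : ℤ) : ℝ) *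
        (∏ k : Fin r, bf (l (r - 1 - k) + k - σ k)) := by
    unfold W2
    rw [← Matrix.det_transpose, Matrix.det_apply']
    rfl
  rw [h3, Finset.mul_sum]
  apply Finset.sum_congr rfl
  intro σ _
  rw [← Finset.mul_sum, ← Finset.mul_sum]
  have h4 : ∑ i : Fin r, ((l (r - 1 - i) + i - σ i : ℤ) : ℝ) = ((∑ c ∈ Finset.range r, l c : ℤ) : ℝ) := by
    rw [← Int.cast_sum, Finset.sum_sub_distrib, Finset.sum_add_distrib,
      Equiv.sum_comp σ (fun i => ((i : ℕ) : ℤ)), ← Finset.sum_range_reflect, Finset.sum_range]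
    simp
  rw [h4]; ring

lemma W2_rec (r : ℕ) : WRec R2 (Stair r) (fun I => W2 r (fun c => (rl I c : ℤ))) := by
  constructor
  · have : rl ∅ = fun _ => 0 := by funext c; simp [rl]
    simp only [this, W2]
    rw [Matrix.det_of_isLowerTriangular]
    · simp [bf]
    · intro i j hij
      have : (i : ℕ) < j := hij
      simp only [Matrix.of_apply]
      apply bf_neg
      push_cast
      omega
  · intro I hI hl
    have hs := rl_spec (I := I) (fun c s h => hl (c, s) (c, s+1) (Or.inl ⟨rfl, rfl⟩) h)
    have hle : ∀ c, rl I (c+1) ≤ rl I c := by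
      intro c
      by_contra h
      push Not at h
      have h1 : (c+1, rl I c) ∈ I := (hs _ _).2 h
      have h2 : (c, rl I c) ∈ I := hl (c, rl I c) (c+1, rl I c) (Or.inr ⟨rfl, rfl⟩) h1
      have := (hs _ _).1 h2
      omega
    have hW := W2_sum r (fun c => (rl I c : ℤ))
    simp only
    rw [sum_rl hI]
    push_cast at hW ⊢
    rw [← hW]
    classical
    set φ : ℕ → ℝ := fun c => W2 r (Function.update (fun c => (rl I c : ℤ)) c (rl I c - 1)) with hφ
    have e1 : ∑ x ∈ I with MaxIn R2 I x, W2 r (fun c => (rl (I.erase x) c : ℤ)) =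
       ∑ x ∈ I with MaxIn R2 I x, φ x.1 := by
      apply Finset.sum_congr rfl
      intro x hx
      rw [Finset.mem_filter] at hx
      have := (hs x.1 x.2).1 hx.1
      rw [rl_erase hx.1, hφ]
      simp only
      congr 1
      funext c
      by_cases h : c = x.1
      · subst h
        simp only [Function.update_self]; omega
      · simp only [Function.update_of_ne h]
    symm
    convert e1.trans ?_ using 1
    refine sum_max (fun c s => Or.inl ⟨rfl, rfl⟩) hI hl φ ?_
    intro c hc h
    have hz : rl I c = rl I (c+1) ∨ rl I c = 0 := by
      rcases h with h | h
      · exact Or.inr h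
      · left
        by_cases h0 : rl I c = 0
        · have := hle c; omega
        unfold MaxIn at h
        push Not at h
        obtain ⟨y, hy, hxy⟩ := h
        have h1 := (hs y.1 y.2).1 hy
        have h2 := hle c
        rcases hxy with ⟨a, b⟩ | ⟨a, b⟩
        · simp only at a b
          rw [a] at h1; omega
        · simp only at a b
          rw [a] at h1; omega
    rw [hφ]
    simp only
    by_cases hc1 : c + 1 < r
    · have hz' : rl I c = rl I (c+1) := by
        have := hle c; omega
      unfold W2
      apply Matrix.det_zero_of_row_eq (i := ⟨r - 1 - c, by omega⟩) (j := ⟨r - 1 - (c + 1), by omega⟩)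
      · intro h; simp at h; omega
      · funext j
        simp only [Matrix.of_apply]
        rw [show r - 1 - (r - 1 - c) = c by omega, show r - 1 - (r - 1 - (c+1)) = c + 1 by omega,
          Function.update_self, Function.update_of_ne (by omega), hz']
        congr 1
        omega
    · have hcr : r - 1 = c := by omega
      have h0 : rl I c = 0 := by
        rcases hz with hz | hz
        · by_contra hne
          have h1 : (c+1, 0) ∈ I := (hs _ _).2 (by omega)
          have := mem_Stair.1 (hI h1)
          simp at this; omega
        · exact hz
      unfold W2
      apply Matrix.det_eq_zero_of_row_eq_zero (⟨0, by omega⟩ : Fin r)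
      intro j
      simp only [Matrix.of_apply]
      rw [show r - 1 - 0 = c by omega, Function.update_self, h0]
      apply bf_neg
      push_cast
      omega

lemma bf_desc (k j : ℕ) : bf ((k:ℤ) - j) = ((k.factorial : ℝ))⁻¹ * (descPochhammer ℝ j).eval (k:ℝ) := by
  rw [descPochhammer_eval_eq_descFactorial]
  rcases le_or_gt j k with h | h
  · rw [show (k:ℤ) - j = ((k - j : ℕ) : ℤ) by omega, bf_nat, ← Nat.factorial_mul_descFactorial h]
    have : (((k-j).factorial : ℕ) : ℝ) ≠ 0 := by positivity
    have : ((k.descFactorial j : ℕ) : ℝ) ≠ 0 := by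
      rw [Nat.cast_ne_zero, Ne, Nat.descFactorial_eq_zero_iff_lt]; omega
    push_cast
    field_simp
  · rw [bf_neg (by omega), Nat.descFactorial_of_lt h]; simp

lemma W2_eval' (r : ℕ) : W2 r (fun c => (rl (Stair r) c : ℤ)) =
    (∏ i ∈ Finset.range r, (((2 * i + 1).factorial : ℝ))⁻¹) *
      PP (fun i j => 2 * ((j:ℝ) - i)) (Finset.range r) := by
  unfold W2
  have h1 : (Matrix.of fun i j : Fin r => bf ((rl (Stair r) (r - 1 - i) : ℤ) + i - j)) =
      Matrix.of fun i j : Fin r => (((2 * (i:ℕ) + 1).factorial : ℝ))⁻¹ *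
        (Matrix.of fun i j : Fin r => (descPochhammer ℝ (j:ℕ)).eval ((2 * (i:ℕ) + 1 : ℕ) : ℝ)) i j := by
    ext i j
    simp only [Matrix.of_apply]
    rw [← bf_desc, rl_Stair]
    congr 1
    omega
  rw [h1, Matrix.det_mul_column]
  congr 1
  · rw [Finset.prod_range]
  · have := Matrix.det_eval_matrixOfPolynomials_eq_det_vandermonde
      (fun i : Fin r => ((2 * (i:ℕ) + 1 : ℕ) : ℝ)) (fun j => descPochhammer ℝ (j:ℕ))
      (fun i => descPochhammer_natDegree ℝ i) (fun i => monic_descPochhammer ℝ i)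
    rw [← this, Matrix.det_vandermonde, PP, Finset.prod_range]
    apply Finset.prod_congr rfl
    intro i _
    rw [Finset.prod_range, ← Finset.prod_filter]
    · apply Finset.prod_congr
      · ext j; simp
      · intro j _
        push_cast; ring

lemma PP2_succ (r : ℕ) : PP (fun i j => 2 * ((j:ℝ) - i)) (Finset.range (r+1)) =
    PP (fun i j => 2 * ((j:ℝ) - i)) (Finset.range r) * (2^r * r.factorial) := by
  have h : ∀ s, (∀ a ∈ s, a < r) → PP (fun i j => 2 * ((j:ℝ) - i)) (insert r s) =
    PP (fun i j => 2 * ((j:ℝ) - i)) s * ∏ d ∈ s, (2 * ((r:ℝ) - d)) := by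
    intro s hs
    have hr : r ∉ s := fun h => (hs r h).false
    have e : ∀ t, PP (fun i j => 2 * ((j:ℝ) - i)) t = PP (fun i j => if i < j then 2 * ((j:ℝ) - i) else 2 * ((i:ℝ) - j)) t := by
      intro t
      unfold PP
      apply Finset.prod_congr rfl
      intro a _
      apply Finset.prod_congr rfl
      intro b _
      by_cases hab : a < b <;> simp [hab]
    rw [e, e, PP_insert _ _ hr]
    · congr 1
      apply Finset.prod_congr rfl
      intro d hd
      have := hs d hd
      rw [if_neg (by omega)]
    · intro a b
      rcases lt_trichotomy a b with h | h | h
      · simp [h, h.not_gt]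
      · simp [h]
      · simp [h, h.not_gt]
  rw [Finset.range_add_one, h _ (by simp)]
  congr 1
  rw [Finset.prod_mul_distrib]
  simp only [Finset.prod_const, Finset.card_range]
  congr 1
  rw [← Nat.descFactorial_self, Nat.descFactorial_eq_prod_range, Nat.cast_prod]
  apply Finset.prod_congr rfl
  intro d hd
  rw [Finset.mem_range] at hd
  push_cast [Nat.cast_sub hd.le]
  ring

lemma W2_eval (r : ℕ) : W2 r (fun c => (rl (Stair r) c : ℤ)) =
    1 / ∏ i ∈ Finset.Icc 1 r, ((2 * i - 1 : ℕ) : ℝ) ^ (r + 1 - i) := by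
  rw [W2_eval']
  induction r with
  | zero => simp [PP]
  | succ r ih =>
    rw [Finset.prod_range_succ, PP2_succ]
    have e : ∏ i ∈ Finset.Icc 1 (r+1), ((2 * i - 1 : ℕ) : ℝ) ^ (r + 1 + 1 - i) =
      (∏ i ∈ Finset.Icc 1 r, ((2 * i - 1 : ℕ) : ℝ) ^ (r + 1 - i)) *
        ∏ i ∈ Finset.Icc 1 (r+1), ((2 * i - 1 : ℕ) : ℝ) := by
      rw [Finset.prod_Icc_succ_top (by omega), Finset.prod_Icc_succ_top (by omega),
        ← mul_assoc, ← Finset.prod_mul_distrib]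
      congr 1
      · apply Finset.prod_congr rfl
        intro i hi
        rw [Finset.mem_Icc] at hi
        rw [← pow_succ]
        congr 1; omega
      · rw [show r + 1 + 1 - (r + 1) = 1 by omega, pow_one]
    have e2 : ∀ r : ℕ, (∏ i ∈ Finset.Icc 1 (r+1), ((2 * i - 1 : ℕ) : ℝ)) * (2^r * r.factorial) = (2 * r + 1).factorial := by
      intro r
      induction r with
      | zero => simp
      | succ r ih =>
        rw [Finset.prod_Icc_succ_top (by omega), show 2 * (r+1) + 1 = 2 * r + 1 + 1 + 1 by ring,
          Nat.factorial_succ (2 * r + 1 + 1), Nat.factorial_succ (2 * r + 1), Nat.factorial_succ r,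
          show 2 * (r + 1 + 1) - 1 = 2 * r + 3 by omega]
        push_cast
        rw [← ih]
        push_cast
        ring
    have hp : ∏ i ∈ Finset.Icc 1 (r+1), ((2 * i - 1 : ℕ) : ℝ) ≠ 0 := by
      rw [Finset.prod_ne_zero_iff]
      intro i hi
      rw [Finset.mem_Icc] at hi
      rw [Nat.cast_ne_zero]; omega
    rw [e, ← e2 r, ← one_div_mul_one_div, ← ih]
    have : ((r.factorial : ℕ) : ℝ) ≠ 0 := by positivity
    field_simp
end BP

namespace BP

/-- cumulative row sums for the first polytope -/
def S1 (a : ℝ) (t : ℕ × ℕ → ℝ) (i j : ℕ) : ℝ :=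
  (if i + 1 ≤ j then t (j - i - 1, i) else a) - t (j, i)

/-- the linear parametrization for the first polytope -/
def M1 (n : ℕ) : (ℝ × (ℕ × ℕ → ℝ)) →ₗ[ℝ] (Fin n × Fin n → ℝ) where
  toFun u p := S1 u.1 u.2 p.1 p.2 - (if (p.1 : ℕ) = 0 then 0 else S1 u.1 u.2 (p.1 - 1) p.2)
  map_add' u v := by
    funext p
    simp only [S1, Prod.fst_add, Prod.snd_add, Pi.add_apply]
    split_ifs <;> ring
  map_smul' c u := by
    funext p
    simp only [S1, Prod.smul_fst, Prod.smul_snd, Pi.smul_apply, smul_eq_mul, RingHom.id_apply]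
    split_ifs <;> ring

/-- admissible sequences -/
def Good (n : ℕ) (A : ℕ → ℕ) : Prop :=
  ∀ i, A i ≤ n - 1 - i ∧ A (i+1) ≤ A i ∧ A i ≤ A (i+1) + 1

/-- filling of a sequence -/
def tA (A : ℕ → ℕ) (x : ℕ × ℕ) : ℕ := if x.1 < A x.2 then 1 else 0

/-- the values of the permutation -/
def sA (A : ℕ → ℕ) (k : ℕ) : ℕ := if 0 < k ∧ A (k-1) = A k + 1 then A k else A k + k

lemma tA_mem {n : ℕ} {A : ℕ → ℕ} (hA : Good n A) : tA A ∈ TSet R1 (Stair (n-1)) 1 := by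
  refine ⟨?_, ?_, ?_⟩
  · rintro ⟨c, i⟩ hx
    rw [mem_Stair] at hx
    have := (hA i).1
    simp only [tA] at hx ⊢
    rw [if_neg (by omega)]
  · intro x; unfold tA; split_ifs <;> omega
  · rintro ⟨c, i⟩ ⟨d, j⟩ h
    simp only [R1] at h
    simp only [tA]
    rcases h with ⟨rfl, rfl⟩ | ⟨rfl, rfl⟩
    · have := hA i; split_ifs <;> omega
    · have := hA j; split_ifs <;> omega

lemma exists_A {n : ℕ} {t : ℕ × ℕ → ℕ} (ht : t ∈ TSet R1 (Stair (n-1)) 1) :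
    ∃ A, Good n A ∧ t = tA A := by
  obtain ⟨h0, h1, h2⟩ := ht
  have e1 : ∀ c i, t (c, i+1) ≤ t (c, i) := fun c i => h2 _ _ (Or.inl ⟨rfl, rfl⟩)
  have e2 : ∀ c i, t (c+1, i) ≤ t (c, i+1) := fun c i => h2 _ _ (Or.inr ⟨rfl, rfl⟩)
  have hex : ∀ i, ∃ c, t (c, i) = 0 := fun i => ⟨n, h0 _ (by rw [mem_Stair]; simp; omega)⟩
  classical
  have hanti : ∀ i c d, c ≤ d → t (d, i) ≤ t (c, i) := by
    intro i c d h
    induction h with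
    | refl => exact le_rfl
    | step _ ih => exact ((e2 _ _).trans (e1 _ _)).trans ih
  set A : ℕ → ℕ := fun i => Nat.find (hex i) with hAdef
  have hA0 : ∀ i, t (A i, i) = 0 := fun i => Nat.find_spec (hex i)
  have hA1 : ∀ i c, c < A i → t (c, i) = 1 := by
    intro i c h
    have := Nat.find_min (hex i) h
    have := h1 (c, i)
    omega
  have hle : ∀ i c, t (c, i) = 0 → A i ≤ c := fun i c h => Nat.find_min' (hex i) h
  refine ⟨A, fun i => ⟨?_, ?_, ?_⟩, ?_⟩
  · apply hle; apply h0; rw [mem_Stair]; simp only; omega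
  · apply hle; have := e1 (A i) i; have := hA0 i; omega
  · apply hle; have := e2 (A (i+1)) i; have := hA0 (i+1); omega
  · funext x
    unfold tA
    split_ifs with h
    · exact hA1 _ _ h
    · have := hanti x.2 (A x.2) x.1 (by omega)
      have h3 := hA0 x.2
      have : t (x.1, x.2) = 0 := by omega
      exact this

lemma M1_apply {n : ℕ} {A : ℕ → ℕ} (hA : Good n A) (p : Fin n × Fin n) :
    M1 n (1, fun x => (tA A x : ℝ)) p = if sA A p.1 = p.2 then 1 else 0 := by
  obtain ⟨k, j⟩ := p
  obtain ⟨k, hk⟩ := k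
  obtain ⟨j, hj⟩ := j
  have hS : ∀ i, S1 1 (fun x => (tA A x : ℝ)) i j = if A i ≤ j ∧ j ≤ A i + i then 1 else 0 := by
    intro i
    simp only [S1, tA]
    have := hA i
    split_ifs <;> first | (exfalso; omega) | norm_num
  show S1 1 (fun x => (tA A x : ℝ)) k j - (if k = 0 then 0 else S1 1 (fun x => (tA A x : ℝ)) (k-1) j) = if sA A k = j then 1 else 0
  rw [hS, hS]
  unfold sA
  rcases Nat.eq_zero_or_pos k with rfl | h
  · simp only [if_true]
    split_ifs <;> first | (exfalso; omega) | norm_num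
  · have := hA (k-1)
    rw [show k - 1 + 1 = k by omega] at this
    split_ifs <;> first | (exfalso; omega) | norm_num

lemma M1_h3 (n : ℕ) (A : AddSubgroup ℝ) (a : ℝ) (t : ℕ × ℕ → ℝ) (_ha : a ∈ A)
    (h0 : ∀ x, x ∉ Stair (n-1) → t x = 0) (hM : ∀ p, M1 n (a, t) p ∈ A) : ∀ x, t x ∈ A := by
  have hS : ∀ i j, i < n → j < n → S1 a t i j ∈ A := by
    intro i j hi hj
    induction i with
    | zero =>
      have := hM (⟨0, hi⟩, ⟨j, hj⟩)
      simpa [M1] using this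
    | succ i ih =>
      have h1 := hM (⟨i+1, hi⟩, ⟨j, hj⟩)
      have h2 := A.add_mem h1 (ih (by omega))
      simpa [M1] using h2
  have key : ∀ d c i, n ≤ c + i + d → t (c, i) ∈ A := by
    intro d
    induction d with
    | zero => intro c i h; rw [h0 _ (by rw [mem_Stair]; simp only; omega)]; exact A.zero_mem
    | succ d ih =>
      intro c i h
      by_cases hc : c + i < n - 1
      · have h1 := hS i (c + i + 1) (by omega) (by omega)
        have h2 := A.add_mem h1 (ih (c+i+1) i (by omega))
        unfold S1 at h2
        rw [if_pos (by omega), show c + i + 1 - i - 1 = c by omega] at h2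
        simpa using h2
      · rw [h0 _ (by rw [mem_Stair]; exact hc)]; exact A.zero_mem
  intro x
  exact key n x.1 x.2 (by omega)

lemma contains3 {n : ℕ} (σ : Equiv.Perm (Fin n)) (π : Equiv.Perm (Fin 3)) (a b c : Fin n)
    (hab : a < b) (hbc : b < c)
    (h01 : σ a < σ b ↔ π 0 < π 1) (h02 : σ a < σ c ↔ π 0 < π 2) (h12 : σ b < σ c ↔ π 1 < π 2) :
    containsPattern σ π := by
  have n1 : σ a ≠ σ b := fun h => hab.ne (σ.injective h)
  have n2 : σ b ≠ σ c := fun h => hbc.ne (σ.injective h)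
  have n3 : σ a ≠ σ c := fun h => (hab.trans hbc).ne (σ.injective h)
  have m1 : π 0 ≠ π 1 := fun h => by simpa using π.injective h
  have m2 : π 1 ≠ π 2 := fun h => by simpa using π.injective h
  have m3 : π 0 ≠ π 2 := fun h => by simpa using π.injective h
  refine ⟨![a, b, c], ?_, ?_⟩
  · intro i j hij
    fin_cases i <;> fin_cases j <;> simp at hij ⊢ <;> first | exact hab | exact hbc | exact hab.trans hbc
  · intro i j
    fin_cases i <;> fin_cases j <;> simp <;> first | assumption | omega

lemma of_contains3 {n : ℕ} {σ : Equiv.Perm (Fin n)} {π : Equiv.Perm (Fin 3)}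
    (h : containsPattern σ π) : ∃ a b c : Fin n, a < b ∧ b < c ∧ (σ a < σ b ↔ π 0 < π 1) ∧
      (σ a < σ c ↔ π 0 < π 2) ∧ (σ b < σ c ↔ π 1 < π 2) := by
  obtain ⟨f, hf, h⟩ := h
  exact ⟨f 0, f 1, f 2, hf (by decide), hf (by decide), h _ _, h _ _, h _ _⟩

lemma sA_range {n : ℕ} {A : ℕ → ℕ} (hA : Good n A) (k l : ℕ) (hl : l ≤ k) :
    A k ≤ sA A l ∧ sA A l ≤ A k + k := by
  induction k with
  | zero => obtain rfl : l = 0 := by omega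
            simp [sA]
  | succ k ih =>
    have := hA k
    rcases Nat.lt_or_ge k l with h | h
    · obtain rfl : l = k + 1 := by omega
      unfold sA; split_ifs <;> omega
    · have := ih h
      omega

lemma sA_ext {n : ℕ} {A : ℕ → ℕ} (hA : Good n A) (k : ℕ) :
    (∀ l < k, sA A l < sA A k) ∨ (∀ l < k, sA A k < sA A l) := by
  rcases k with _ | k
  · left; intro l hl; omega
  have h1 := hA k
  have hk : sA A (k+1) = if A k = A (k+1) + 1 then A (k+1) else A (k+1) + (k+1) := by
    simp [sA]
  rw [hk]
  split_ifs with h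
  · right
    intro l hl
    have := sA_range hA k l (by omega)
    omega
  · left
    intro l hl
    have := sA_range hA k l (by omega)
    omega

lemma exists_perm1 {n : ℕ} {A : ℕ → ℕ} (hA : Good n A) :
    ∃ σ ∈ Av132312 n, ∀ k : Fin n, (σ k : ℕ) = sA A k := by
  have hlt : ∀ k : Fin n, sA A k < n := by
    intro k
    have := sA_range hA k k le_rfl
    have := hA k
    have := k.2
    omega
  have hinj : Function.Injective (fun k : Fin n => (⟨sA A k, hlt k⟩ : Fin n)) := by
    intro k l h
    simp only [Fin.mk.injEq] at h
    rcases lt_trichotomy (k:ℕ) l with h1 | h1 | h1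
    · rcases sA_ext hA l with h2 | h2 <;> have := h2 k h1 <;> omega
    · exact Fin.ext h1
    · rcases sA_ext hA k with h2 | h2 <;> have := h2 l h1 <;> omega
  refine ⟨Equiv.ofBijective _ (Finite.injective_iff_bijective.1 hinj), ⟨?_, ?_⟩, fun k => rfl⟩
  · intro h
    obtain ⟨a, b, c, hab, hbc, h1, h2, h3⟩ := of_contains3 h
    rw [show (p132 0 < p132 1 ↔ True) by decide] at h1
    rw [show (p132 0 < p132 2 ↔ True) by decide] at h2
    rw [show (p132 1 < p132 2 ↔ False) by decide] at h3
    simp only [Equiv.ofBijective_apply, Fin.mk_lt_mk, iff_true, iff_false] at h1 h2 h3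
    rcases sA_ext hA c with h4 | h4
    · exact h3 (h4 b hbc)
    · have := h4 a (hab.trans hbc); omega
  · intro h
    obtain ⟨a, b, c, hab, hbc, h1, h2, h3⟩ := of_contains3 h
    rw [show (p312 0 < p312 1 ↔ False) by decide] at h1
    rw [show (p312 0 < p312 2 ↔ False) by decide] at h2
    rw [show (p312 1 < p312 2 ↔ True) by decide] at h3
    simp only [Equiv.ofBijective_apply, Fin.mk_lt_mk, iff_true, iff_false] at h1 h2 h3
    rcases sA_ext hA c with h4 | h4
    · exact h2 (h4 a (hab.trans hbc))
    · have := h4 b hbc; omega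

lemma card_lt {n : ℕ} (σ : Equiv.Perm (Fin n)) (k : Fin n) :
    (Finset.univ.filter fun l => σ l < σ k).card = σ k := by
  have : (Finset.univ.filter fun l => σ l < σ k) = (Finset.Iio (σ k)).map σ.symm.toEmbedding := by
    ext l; simp [Finset.mem_map_equiv]
  rw [this, Finset.card_map, Fin.card_Iio]

lemma exists_A1 {n : ℕ} (hn : 1 ≤ n) {σ : Equiv.Perm (Fin n)} (hσ : σ ∈ Av132312 n) :
    ∃ A, Good n A ∧ ∀ k : Fin n, (σ k : ℕ) = sA A k := by
  obtain ⟨a1, a2⟩ := hσ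
  have hE : ∀ k, (∀ l < k, σ l < σ k) ∨ (∀ l < k, σ k < σ l) := by
    intro k
    by_contra h
    push Not at h
    obtain ⟨⟨x, hx, hx'⟩, y, hy, hy'⟩ := h
    have hx'' : σ k < σ x := lt_of_le_of_ne hx' (fun h => hx.ne' (σ.injective h))
    have hy'' : σ y < σ k := lt_of_le_of_ne hy' (fun h => hy.ne (σ.injective h))
    rcases lt_trichotomy x y with h | h | h
    · apply a2
      apply contains3 σ p312 x y k h hy
      · rw [show (p312 0 < p312 1 ↔ False) by decide, iff_false]; omega
      · rw [show (p312 0 < p312 2 ↔ False) by decide, iff_false]; omega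
      · rw [show (p312 1 < p312 2 ↔ True) by decide, iff_true]; omega
    · subst h; omega
    · apply a1
      apply contains3 σ p132 y x k h hx
      · rw [show (p132 0 < p132 1 ↔ True) by decide, iff_true]; omega
      · rw [show (p132 0 < p132 2 ↔ True) by decide, iff_true]; omega
      · rw [show (p132 1 < p132 2 ↔ False) by decide, iff_false]; omega
  set z : Fin n := ⟨0, hn⟩ with hz
  have hzle : ∀ k : Fin n, z ≤ k := fun k => Nat.zero_le _
  set A : ℕ → ℕ := fun i => (Finset.univ.filter fun l : Fin n => i < (l:ℕ) ∧ σ l < σ z).card with hAd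
  have hstep : ∀ k : Fin n, 0 < (k:ℕ) → A (k - 1) = A k + if σ k < σ z then 1 else 0 := by
    intro k hk
    simp only [hAd]
    split_ifs with h
    · rw [← Finset.card_insert_of_notMem (a := k) (by simp)]
      congr 1
      ext l
      simp only [Finset.mem_filter, Finset.mem_univ, true_and, Finset.mem_insert]
      constructor
      · rintro ⟨h1, h2⟩
        rcases eq_or_ne l k with h3 | h3
        · exact Or.inl h3
        · right; refine ⟨?_, h2⟩; have : (l:ℕ) ≠ k := fun h => h3 (Fin.ext h); omega
      · rintro (rfl | ⟨h1, h2⟩)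
        · exact ⟨by omega, h⟩
        · exact ⟨by omega, h2⟩
    · rw [add_zero]
      congr 1
      ext l
      simp only [Finset.mem_filter, Finset.mem_univ, true_and]
      constructor
      · rintro ⟨h1, h2⟩
        refine ⟨?_, h2⟩
        have : (l:ℕ) ≠ k := fun h' => h (by rw [← Fin.ext h']; exact h2)
        omega
      · rintro ⟨h1, h2⟩; exact ⟨by omega, h2⟩
  have hbd : ∀ i, A i ≤ n - 1 - i := by
    intro i
    by_cases hi : i < n
    · have : A i ≤ (Finset.Ioi (⟨i, hi⟩ : Fin n)).card := by
        apply Finset.card_le_card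
        intro l hl
        simp only [Finset.mem_filter, Finset.mem_univ, true_and, Finset.mem_Ioi] at hl ⊢
        exact hl.1
      rw [Fin.card_Ioi] at this
      exact this
    · have : A i = 0 := by
        simp only [hAd, Finset.card_eq_zero]
        ext l
        have := l.2
        simp; omega
      omega
  refine ⟨A, ?_, ?_⟩
  · intro i
    refine ⟨hbd i, ?_⟩
    by_cases hi : i + 1 < n
    · have := hstep ⟨i+1, hi⟩ (by simp)
      simp only [Nat.add_sub_cancel] at this
      split_ifs at this <;> omega
    · have := hbd i; have := hbd (i+1); omega
  · intro k
    have hval := card_lt σ k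
    rcases Nat.eq_zero_or_pos (k:ℕ) with hk | hk
    · have hkz : k = z := Fin.ext hk
      have : sA A k = A k := by simp [sA, hk]
      rw [this, ← hval]
      simp only [hAd]
      congr 1
      ext l
      simp only [Finset.mem_filter, Finset.mem_univ, true_and]
      constructor
      · intro h
        refine ⟨?_, by rw [← hkz]; exact h⟩
        have : l ≠ k := fun h' => by rw [h'] at h; exact h.false
        have : (l:ℕ) ≠ k := fun h => this (Fin.ext h)
        omega
      · rintro ⟨_, h⟩; rw [hkz]; exact h
    · have hst := hstep k hk
      have hzk : z < k := hk
      by_cases h : σ k < σ z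
      · rw [if_pos h] at hst
        have : sA A k = A k := by simp [sA, hk, hst]
        rw [this, ← hval]
        simp only [hAd]
        congr 1
        ext l
        simp only [Finset.mem_filter, Finset.mem_univ, true_and]
        constructor
        · intro h'
          refine ⟨?_, h'.trans h⟩
          by_contra hlk
          have hlk : l ≤ k := not_lt.1 hlk
          have : l ≠ k := fun h'' => by rw [h''] at h'; exact h'.false
          have hlk : l < k := lt_of_le_of_ne hlk this
          rcases hE k with h2 | h2
          · exact (h2 z hzk).not_gt h
          · exact (h2 l hlk).not_gt h'
        · rintro ⟨h1, h2⟩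
          have h1 : k < l := h1
          rcases hE l with h3 | h3
          · exact absurd (h3 z (hzk.trans h1)) h2.not_gt
          · exact h3 k h1
      · rw [if_neg h] at hst
        have hk2 : σ z < σ k := lt_of_le_of_ne (not_lt.1 h) (fun h' => hzk.ne (σ.injective h'))
        have : sA A k = A k + k := by simp [sA, hst]
        rw [this, ← hval]
        have e : (Finset.univ.filter fun l => σ l < σ k) =
            (Finset.univ.filter fun l : Fin n => (k:ℕ) < (l:ℕ) ∧ σ l < σ z) ∪ Finset.Iio k := by
          ext l
          simp only [Finset.mem_filter, Finset.mem_univ, true_and, Finset.mem_union, Finset.mem_Iio]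
          constructor
          · intro h'
            rcases lt_trichotomy l k with h1 | h1 | h1
            · exact Or.inr h1
            · rw [h1] at h'; exact absurd h' (lt_irrefl _)
            · left
              refine ⟨h1, ?_⟩
              rcases hE l with h3 | h3
              · exact absurd (h3 k h1) h'.not_gt
              · exact h3 z (hzk.trans h1)
          · rintro (⟨_, h2⟩ | h1)
            · exact h2.trans hk2
            · rcases hE k with h3 | h3
              · exact h3 l h1
              · exact absurd (h3 z hzk) hk2.not_gt
        rw [e, Finset.card_union_of_disjoint, Fin.card_Iio]
        rw [Finset.disjoint_left]
        intro l hl hl'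
        simp only [Finset.mem_filter, Finset.mem_univ, true_and, Finset.mem_Iio] at hl hl'
        have := hl.1
        have : (l:ℕ) < k := hl'
        omega

open Pointwise in
theorem part1 (n : ℕ) (hn : 1 ≤ n) :
    Filter.Tendsto
      (fun m : ℕ =>
        (Set.ncard {x : Fin n × Fin n → ℤ |
            (fun p => (x p : ℝ)) ∈ (m : ℝ) • B132312 n} : ℝ) / (m : ℝ) ^ (n.choose 2))
      Filter.atTop
      (nhds ((∏ i ∈ Finset.Icc 1 (n - 1), (Nat.factorial (i - 1) : ℝ)) /
        (∏ i ∈ Finset.Icc 1 (n - 1), (Nat.factorial (2 * i - 1) : ℝ)))) := by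
  have hT := TSet_tendsto R1 R1_irrefl (Stair (n-1)) (low1 (n-1)) _ (W1_rec (n-1))
  rw [W1_eval, Stair_card, show n - 1 + 1 = n by omega] at hT
  refine hT.congr' ?_
  filter_upwards [Filter.eventually_gt_atTop 0] with m hm
  have := ncard_lattice R1 (Stair (n-1)) (permMatrix '' Av132312 n) (M1 n) ?_ ?_ (M1_h3 n) ?_ m hm
  · unfold B132312
    rw [this]
  · rintro _ ⟨σ, hσ, rfl⟩
    obtain ⟨A, hA, h⟩ := exists_A1 hn hσ
    refine ⟨tA A, tA_mem hA, ?_⟩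
    funext p
    rw [M1_apply hA, permMatrix, ← h]
    simp [Fin.ext_iff]
  · intro t ht
    obtain ⟨A, hA, rfl⟩ := exists_A ht
    obtain ⟨σ, hσ, h⟩ := exists_perm1 hA
    refine ⟨σ, hσ, ?_⟩
    funext p
    rw [M1_apply hA, permMatrix, ← h]
    simp [Fin.ext_iff]
  · rintro _ ⟨σ, hσ, rfl⟩ p
    unfold permMatrix
    split_ifs
    · exact ⟨1, by simp⟩
    · exact ⟨0, by simp⟩
end BP

namespace BP

/-- `τ` -/
def tau (a : ℝ) (t : ℕ × ℕ → ℝ) (k i z : ℕ) : ℝ := if z = 0 then a else t (z - 1, k - 1 - i)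

/-- `ρ` -/
def rhov (a : ℝ) (t : ℕ × ℕ → ℝ) (k i h : ℕ) : ℝ :=
  if h = 0 then a else if h ≤ k then a - t (i, k - h) else 0

/-- valley positions -/
abbrev isV (n p : ℕ) : Prop := p % 2 = 0 ∧ p + 1 < n

/-- matrix entries for the second polytope, in terms of the distance `s` from the top -/
def E2 (n k : ℕ) (a : ℝ) (t : ℕ × ℕ → ℝ) (p s : ℕ) : ℝ :=
  if s < p / 2 then 0
  else if isV n p then rhov a t k (p/2) (s - p/2) - rhov a t k (p/2) (s - p/2 + 1)
  else tau a t k (p/2) (s - p/2) - tau a t k (p/2) (s - p/2 + 1)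

/-- the linear parametrization for the second polytope -/
def M2 (n k : ℕ) : (ℝ × (ℕ × ℕ → ℝ)) →ₗ[ℝ] (Fin n × Fin n → ℝ) where
  toFun u p := E2 n k u.1 u.2 p.1 (n - 1 - p.2)
  map_add' u v := by
    funext p
    simp only [E2, tau, rhov, Prod.fst_add, Prod.snd_add, Pi.add_apply]
    split_ifs <;> ring
  map_smul' c u := by
    funext p
    simp only [E2, tau, rhov, Prod.smul_fst, Prod.smul_snd, Pi.smul_apply, smul_eq_mul, RingHom.id_apply]
    split_ifs <;> ring

/-- admissible sequences -/
def Good2 (Q : ℕ → ℕ) : Prop := (∀ i, Q i ≤ i) ∧ Monotone Q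

/-- filling of a sequence -/
def tQ (k : ℕ) (Q : ℕ → ℕ) (x : ℕ × ℕ) : ℕ := if x.1 < Q (k - 1 - x.2) then 1 else 0

lemma rex (k : ℕ) (Q : ℕ → ℕ) (i : ℕ) : ∃ j, k ≤ j ∨ i < Q j := ⟨k, Or.inl le_rfl⟩

open Classical in
/-- number of peaks above a valley -/
noncomputable def rQ (k : ℕ) (Q : ℕ → ℕ) (i : ℕ) : ℕ := Nat.find (rex k Q i)

lemma rQ_le (k : ℕ) (Q : ℕ → ℕ) (i : ℕ) : rQ k Q i ≤ k := Nat.find_min' _ (Or.inl le_rfl)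

lemma rQ_spec {k : ℕ} {Q : ℕ → ℕ} (hQ : Good2 Q) (i j : ℕ) (hj : j < k) :
    j < rQ k Q i ↔ Q j ≤ i := by
  classical
  constructor
  · intro h
    have := Nat.find_min (rex k Q i) h
    omega
  · intro h
    by_contra h'
    have h1 := Nat.find_spec (rex k Q i)
    change k ≤ rQ k Q i ∨ i < Q (rQ k Q i) at h1
    have h2 := hQ.2 (not_lt.1 h')
    omega

/-- distance from the top -/
noncomputable def sQ (n k : ℕ) (Q : ℕ → ℕ) (p : ℕ) : ℕ :=
  if isV n p then p / 2 + rQ k Q (p/2) else p / 2 + Q (p/2)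

lemma tQ_mem {k : ℕ} {Q : ℕ → ℕ} (hQ : Good2 Q) : tQ k Q ∈ TSet R2 (Stair (k-1)) 1 := by
  refine ⟨?_, ?_, ?_⟩
  · rintro ⟨c, i⟩ hx
    rw [mem_Stair] at hx
    have := hQ.1 (k - 1 - i)
    simp only [tQ] at hx ⊢
    rw [if_neg (by omega)]
  · intro x; unfold tQ; split_ifs <;> omega
  · rintro ⟨c, i⟩ ⟨d, j⟩ h
    simp only [R2] at h
    simp only [tQ]
    rcases h with ⟨rfl, rfl⟩ | ⟨rfl, rfl⟩
    · have := hQ.2 (show k - 1 - (i+1) ≤ k - 1 - i by omega); split_ifs <;> omega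
    · split_ifs <;> omega

lemma exists_Q {k : ℕ} {t : ℕ × ℕ → ℕ} (ht : t ∈ TSet R2 (Stair (k-1)) 1) :
    ∃ Q, Good2 Q ∧ t = tQ k Q := by
  obtain ⟨h0, h1, h2⟩ := ht
  have e1 : ∀ c i, t (c, i+1) ≤ t (c, i) := fun c i => h2 _ _ (Or.inl ⟨rfl, rfl⟩)
  have e2 : ∀ c i, t (c+1, i) ≤ t (c, i) := fun c i => h2 _ _ (Or.inr ⟨rfl, rfl⟩)
  have hex : ∀ i, ∃ c, t (c, i) = 0 := fun i => ⟨k, h0 _ (by rw [mem_Stair]; simp; omega)⟩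
  classical
  have hanti : ∀ i c d, c ≤ d → t (d, i) ≤ t (c, i) := by
    intro i c d h
    induction h with
    | refl => exact le_rfl
    | step _ ih => exact (e2 _ _).trans ih
  set A : ℕ → ℕ := fun i => Nat.find (hex i) with hAdef
  have hA0 : ∀ i, t (A i, i) = 0 := fun i => Nat.find_spec (hex i)
  have hA1 : ∀ i c, c < A i → t (c, i) = 1 := by
    intro i c h
    have := Nat.find_min (hex i) h
    have := h1 (c, i)
    omega
  have hle : ∀ i c, t (c, i) = 0 → A i ≤ c := fun i c h => Nat.find_min' (hex i) h
  have hAa : Antitone A := by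
    apply antitone_nat_of_succ_le
    intro i
    apply hle; have := e1 (A i) i; have := hA0 i; omega
  have hAb : ∀ i, A i ≤ k - 1 - i := by
    intro i
    apply hle; apply h0; rw [mem_Stair]; simp only; omega
  refine ⟨fun i => A (k - 1 - i), ⟨fun i => ?_, fun i j h => ?_⟩, ?_⟩
  · have := hAb (k - 1 - i)
    simp only; omega
  · exact hAa (by omega)
  · funext x
    obtain ⟨c, s⟩ := x
    unfold tQ
    have : A (k - 1 - (k - 1 - s)) = A s := by
      rcases le_or_gt s (k-1) with h | h
      · congr 1; omega
      · have := hAb s; have := hAb (k - 1 - (k - 1 - s)); omega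
    simp only [this]
    split_ifs with h
    · exact hA1 _ _ h
    · have := hanti s (A s) c (by omega)
      have h3 := hA0 s
      omega

lemma M2_apply {n k : ℕ} (hk : k = (n+1)/2) {Q : ℕ → ℕ} (hQ : Good2 Q) (p : Fin n × Fin n) :
    M2 n k (1, fun x => (tQ k Q x : ℝ)) p = if sQ n k Q p.1 = n - 1 - p.2 then 1 else 0 := by
  obtain ⟨p, j⟩ := p
  obtain ⟨p, hp⟩ := p
  obtain ⟨j, hj⟩ := j
  show E2 n k 1 (fun x => (tQ k Q x : ℝ)) p (n - 1 - j) = if sQ n k Q p = n - 1 - j then 1 else 0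
  generalize n - 1 - j = s
  have hi : p / 2 < k := by omega
  have ht : ∀ z, tau 1 (fun x => (tQ k Q x : ℝ)) k (p/2) z = if z ≤ Q (p/2) then 1 else 0 := by
    intro z
    simp only [tau, tQ]
    rw [show k - 1 - (k - 1 - p/2) = p/2 by omega]
    split_ifs <;> first | (exfalso; omega) | norm_num
  have hr : ∀ h, rhov 1 (fun x => (tQ k Q x : ℝ)) k (p/2) h = if h ≤ rQ k Q (p/2) then 1 else 0 := by
    intro h
    simp only [rhov, tQ]
    have hle := rQ_le k Q (p/2)
    by_cases h0 : h = 0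
    · simp [h0]
    by_cases h1 : h ≤ k
    · have := rQ_spec (k := k) hQ (p/2) (h-1) (by omega)
      rw [show k - 1 - (k - h) = h - 1 by omega]
      split_ifs <;> first | (exfalso; omega) | norm_num
    · rw [if_neg h0, if_neg h1, if_neg (by omega)]
  unfold E2 sQ
  rw [ht, ht, hr, hr]
  split_ifs <;> first | (exfalso; omega) | norm_num

lemma M2_h3 {n k : ℕ} (hk : k = (n+1)/2) (A : AddSubgroup ℝ) (a : ℝ) (t : ℕ × ℕ → ℝ) (ha : a ∈ A)
    (h0 : ∀ x, x ∉ Stair (k-1) → t x = 0) (hM : ∀ p, M2 n k (a, t) p ∈ A) : ∀ x, t x ∈ A := by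
  have key : ∀ i, i < k → ∀ z, z ≤ i → tau a t k i z ∈ A := by
    intro i hi z
    induction z with
    | zero => intro _; simpa [tau] using ha
    | succ z ih =>
      intro hz
      have h1 := hM (⟨min (2*i+1) (n-1), by omega⟩, ⟨n - 1 - (i + z), by omega⟩)
      change E2 n k a t (min (2*i+1) (n-1)) (n - 1 - (n - 1 - (i + z))) ∈ A at h1
      unfold E2 at h1
      rw [show n - 1 - (n - 1 - (i + z)) = i + z by omega, show min (2*i+1) (n-1) / 2 = i by omega,
        if_neg (by omega), if_neg (by unfold isV; omega), show i + z - i = z by omega] at h1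
      have := A.sub_mem (ih (by omega)) h1
      simpa using this
  rintro ⟨c, s⟩
  by_cases h : (c, s) ∈ Stair (k-1)
  · rw [mem_Stair] at h
    simp only at h
    have := key (k - 1 - s) (by omega) (c + 1) (by omega)
    unfold tau at this
    rw [if_neg (by omega), show k - 1 - (k - 1 - s) = s by omega] at this
    simpa using this
  · rw [h0 _ h]; exact A.zero_mem

lemma sQ_same {n k : ℕ} {Q : ℕ → ℕ} (hQ : Good2 Q) {p q : ℕ} (hpq : p < q)
    (hq : q < n) (h : isV n p ↔ isV n q) : sQ n k Q p < sQ n k Q q := by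
  unfold sQ
  by_cases hp : isV n p
  · rw [if_pos hp, if_pos (h.1 hp)]
    have h1 : p / 2 < q / 2 := by have := h.1 hp; unfold isV at *; omega
    have : rQ k Q (p/2) ≤ rQ k Q (q/2) := by
      by_contra h2
      have h3 := rQ_le k Q (p/2)
      have h4 := (rQ_spec (k := k) hQ (p/2) (rQ k Q (q/2)) (by omega)).1 (by omega)
      have h5 := (rQ_spec (k := k) hQ (q/2) (rQ k Q (q/2)) (by omega)).2 (by omega)
      omega
    omega
  · rw [if_neg hp, if_neg (fun h' => hp (h.2 h'))]
    have hq' : ¬ isV n q := fun h' => hp (h.2 h')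
    have h1 : p / 2 < q / 2 := by unfold isV at *; omega
    have := hQ.2 h1.le
    omega

lemma sQ_diff {n k : ℕ} (hk : k = (n+1)/2) {Q : ℕ → ℕ} (hQ : Good2 Q) {p q : ℕ}
    (hq : q < n) (h1 : isV n p) (h2 : ¬ isV n q) :
    (Q (q/2) ≤ p/2 ∧ sQ n k Q q < sQ n k Q p) ∨ (p/2 < Q (q/2) ∧ sQ n k Q p < sQ n k Q q) := by
  unfold sQ
  rw [if_pos h1, if_neg h2]
  have := rQ_spec (k := k) hQ (p/2) (q/2) (by omega)
  omega

lemma sQ_lt {n k : ℕ} (hk : k = (n+1)/2) {Q : ℕ → ℕ} (hQ : Good2 Q) {p : ℕ} (hp : p < n) :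
    sQ n k Q p < n := by
  unfold sQ
  have h1 := rQ_le k Q (p/2)
  have h2 := hQ.1 (p/2)
  unfold isV
  split_ifs <;> omega

lemma exists_perm2 {n k : ℕ} (hk : k = (n+1)/2) {Q : ℕ → ℕ} (hQ : Good2 Q) :
    ∃ σ ∈ AltAv123 n, ∀ p : Fin n, n - 1 - (σ p : ℕ) = sQ n k Q p := by
  have hlt : ∀ p : Fin n, sQ n k Q p < n := fun p => sQ_lt hk hQ p.2
  have hne : ∀ p q : ℕ, p < q → q < n → sQ n k Q p ≠ sQ n k Q q := by
    intro p q hpq hq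
    by_cases h : isV n p ↔ isV n q
    · exact (sQ_same hQ hpq hq h).ne
    · by_cases hp : isV n p
      · have := sQ_diff hk hQ hq hp (fun h' => h ⟨fun _ => h', fun _ => hp⟩)
        omega
      · have := sQ_diff (q := p) hk hQ (by omega) (by by_contra h'; exact h ⟨fun a => absurd a hp, fun a => absurd a h'⟩) hp
        omega
  have hinj : Function.Injective (fun p : Fin n => (⟨n - 1 - sQ n k Q p, by have := p.2; omega⟩ : Fin n)) := by
    intro p q h
    simp only [Fin.mk.injEq] at h
    have h1 := hlt p
    have h2 := hlt q
    rcases lt_trichotomy (p:ℕ) q with h3 | h3 | h3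
    · have := hne p q h3 q.2; omega
    · exact Fin.ext h3
    · have := hne q p h3 p.2; omega
  refine ⟨Equiv.ofBijective _ (Finite.injective_iff_bijective.1 hinj), ⟨?_, ?_⟩, fun p => ?_⟩
  · intro j hj
    simp only [Equiv.ofBijective_apply, Fin.mk_lt_mk]
    have hl1 := sQ_lt (k := k) hk hQ (show j < n by omega)
    have hl2 := sQ_lt (k := k) hk hQ hj
    constructor
    · intro he
      rw [Nat.even_iff] at he
      have := sQ_diff (p := j) (q := j+1) hk hQ hj ⟨he, hj⟩ (by unfold isV; omega)
      have := hQ.1 ((j+1)/2)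
      omega
    · intro ho
      rw [Nat.odd_iff] at ho
      by_cases hv : isV n (j+1)
      · have := sQ_diff (p := j+1) (q := j) hk hQ (by omega) hv (by unfold isV; omega)
        have := hQ.1 (j/2)
        omega
      · have := sQ_same (k := k) hQ (show j < j + 1 by omega) hj (by unfold isV at *; omega)
        omega
  · intro h
    obtain ⟨a, b, c, hab, hbc, h1, h2, h3⟩ := of_contains3 h
    rw [show (p123 0 < p123 1 ↔ True) by decide] at h1
    rw [show (p123 0 < p123 2 ↔ True) by decide] at h2
    rw [show (p123 1 < p123 2 ↔ True) by decide] at h3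
    simp only [Equiv.ofBijective_apply, Fin.mk_lt_mk, iff_true] at h1 h2 h3
    have s1 := sQ_same (k := k) hQ hab b.2
    have s2 := sQ_same (k := k) hQ hbc c.2
    have s3 := sQ_same (k := k) hQ (hab.trans hbc) c.2
    by_cases e1 : isV n a ↔ isV n b
    · have := s1 e1; omega
    by_cases e2 : isV n b ↔ isV n c
    · have := s2 e2; omega
    have := s3 (by clear * - e1 e2; revert e1 e2; generalize isV n a = A; generalize isV n b = B; generalize isV n c = C; intro e1 e2; by_cases A <;> by_cases B <;> by_cases C <;> simp_all)
    omega
  · have := hlt p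
    simp only [Equiv.ofBijective_apply]
    omega

lemma half_le {n : ℕ} (S : Finset (Fin n)) (m : ℕ) (h1 : ∀ q ∈ S, (q:ℕ)/2 < m)
    (hi : ∀ q ∈ S, ∀ q' ∈ S, (q:ℕ)/2 = (q':ℕ)/2 → q = q') : S.card ≤ m := by
  rw [← Finset.card_image_of_injOn (f := fun q : Fin n => (q:ℕ)/2) (fun q hq q' hq' h => hi q hq q' hq' h)]
  refine (Finset.card_le_card (t := Finset.range m) ?_).trans (by simp)
  intro j hj
  obtain ⟨q, hq, rfl⟩ := Finset.mem_image.1 hj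
  exact Finset.mem_range.2 (h1 q hq)

lemma half_ge {n : ℕ} (S : Finset (Fin n)) (m : ℕ) (h1 : ∀ j < m, ∃ q ∈ S, (q:ℕ)/2 = j) :
    m ≤ S.card := by
  refine le_trans ?_ (Finset.card_image_le (s := S) (f := fun q : Fin n => (q:ℕ)/2))
  refine le_trans (by simp) (Finset.card_le_card (s := Finset.range m) ?_)
  intro j hj
  obtain ⟨q, hq, h⟩ := h1 j (Finset.mem_range.1 hj)
  exact Finset.mem_image.2 ⟨q, hq, h⟩

lemma card_gt {n : ℕ} (σ : Equiv.Perm (Fin n)) (k : Fin n) :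
    (Finset.univ.filter fun l => σ k < σ l).card = n - 1 - σ k := by
  have : (Finset.univ.filter fun l => σ k < σ l) = (Finset.Ioi (σ k)).map σ.symm.toEmbedding := by
    ext l; simp [Finset.mem_map_equiv]
  rw [this, Finset.card_map, Fin.card_Ioi]

lemma card_split {n : ℕ} (S : Fin n → Prop) [DecidablePred S] :
    (Finset.univ.filter S).card = (Finset.univ.filter fun q : Fin n => isV n q ∧ S q).card +
      (Finset.univ.filter fun q : Fin n => ¬ isV n q ∧ S q).card := by
  rw [← Finset.card_filter_add_card_filter_not (s := Finset.univ.filter S) (fun q : Fin n => isV n q),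
    Finset.filter_filter, Finset.filter_filter]
  congr 2 <;> (ext q; simp only [Finset.mem_filter, Finset.mem_univ, true_and]; tauto)

lemma exists_Q2 {n k : ℕ} (hn : 1 ≤ n) (hk : k = (n+1)/2) {σ : Equiv.Perm (Fin n)}
    (hσ : σ ∈ AltAv123 n) : ∃ Q, Good2 Q ∧ ∀ p : Fin n, n - 1 - (σ p : ℕ) = sQ n k Q p := by
  obtain ⟨alt, av⟩ := hσ
  have no123 : ∀ a b c : Fin n, a < b → b < c → σ a < σ b → σ b < σ c → False := by
    intro a b c hab hbc h1 h2
    apply av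
    apply contains3 σ p123 a b c hab hbc
    · rw [show (p123 0 < p123 1 ↔ True) by decide, iff_true]; exact h1
    · rw [show (p123 0 < p123 2 ↔ True) by decide, iff_true]; exact h1.trans h2
    · rw [show (p123 1 < p123 2 ↔ True) by decide, iff_true]; exact h2
  have hv : ∀ p q : Fin n, isV n p → isV n q → p < q → σ q < σ p := by
    intro p q hp hq hpq
    by_contra h
    have h : σ p < σ q := lt_of_le_of_ne (not_lt.1 h) (fun h' => hpq.ne (σ.injective h'))
    refine no123 p q ⟨q + 1, hq.2⟩ hpq ?_ h ?_
    · show (q:ℕ) < q + 1; omega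
    · exact (alt q hq.2).1 (Nat.even_iff.2 hq.1)
  have hpk : ∀ p q : Fin n, ¬ isV n p → ¬ isV n q → p < q → σ q < σ p := by
    intro p q hp hq hpq
    by_contra h
    have h : σ p < σ q := lt_of_le_of_ne (not_lt.1 h) (fun h' => hpq.ne (σ.injective h'))
    have hpq' : (p:ℕ) < q := hpq
    have hq2 := q.2
    have hodd : (p:ℕ) % 2 = 1 := by unfold isV at hp; omega
    refine no123 ⟨p - 1, by omega⟩ p q ?_ hpq ?_ h
    · show (p:ℕ) - 1 < p; omega
    · have := (alt (p-1) (by omega)).1 (Nat.even_iff.2 (by omega))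
      have e : (⟨(p:ℕ) - 1 + 1, by omega⟩ : Fin n) = p := Fin.ext (by simp only; omega)
      rw [e] at this
      exact this
  have hv' : ∀ p q : Fin n, isV n p → isV n q → p ≤ q → σ q ≤ σ p := by
    intro p q hp hq h
    rcases h.eq_or_lt with h | h
    · rw [h]
    · exact (hv p q hp hq h).le
  have hpk' : ∀ p q : Fin n, ¬ isV n p → ¬ isV n q → p ≤ q → σ q ≤ σ p := by
    intro p q hp hq h
    rcases h.eq_or_lt with h | h
    · rw [h]
    · exact (hpk p q hp hq h).le
  have injV : ∀ p q : Fin n, isV n p → isV n q → (p:ℕ)/2 = (q:ℕ)/2 → p = q := by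
    intro p q hp hq h
    apply Fin.ext; unfold isV at hp hq; omega
  have injP : ∀ p q : Fin n, ¬ isV n p → ¬ isV n q → (p:ℕ)/2 = (q:ℕ)/2 → p = q := by
    intro p q hp hq h
    have := p.2
    have := q.2
    apply Fin.ext; unfold isV at hp hq; omega
  set pk : ℕ → Fin n := fun i => ⟨min (2*i+1) (n-1), by omega⟩ with hpkd
  have pkP : ∀ i, ¬ isV n (pk i) := by intro i; simp only [hpkd]; unfold isV; omega
  have pkh : ∀ i < k, ((pk i : Fin n) : ℕ)/2 = i := by intro i hi; simp only [hpkd]; omega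
  have pkq : ∀ q : Fin n, ¬ isV n q → pk (q/2) = q := by
    intro q hq
    have := q.2
    apply injP _ _ (pkP _) hq (pkh _ (by omega))
  set Q : ℕ → ℕ := fun i => (Finset.univ.filter fun q : Fin n => isV n q ∧ σ (pk i) < σ q).card with hQd
  have hQ1 : ∀ i, ∀ q : Fin n, isV n q → σ (pk i) < σ q → (q:ℕ)/2 < i := by
    intro i q hq h
    by_contra h'
    have h2 : 2 * i ≤ q := by omega
    have h3 := hq.2
    have h4 : isV n (2*i) := ⟨by omega, by omega⟩
    have h5 := hv' ⟨2*i, by omega⟩ q h4 hq h2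
    have h6 := (alt (2*i) (by omega)).1 (Nat.even_iff.2 (by omega))
    have e : pk i = ⟨2*i+1, by omega⟩ := Fin.ext (by simp only [hpkd]; omega)
    rw [e] at h
    exact (h.trans_le h5).not_gt h6
  have hQ : Good2 Q := by
    constructor
    · intro i
      apply half_le
      · intro q hq
        simp only [Finset.mem_filter, Finset.mem_univ, true_and] at hq
        exact hQ1 i q hq.1 hq.2
      · intro q hq q' hq'
        simp only [Finset.mem_filter, Finset.mem_univ, true_and] at hq hq'
        exact injV q q' hq.1 hq'.1
    · intro i j hij
      apply Finset.card_le_card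
      intro q hq
      simp only [Finset.mem_filter, Finset.mem_univ, true_and] at hq ⊢
      refine ⟨hq.1, lt_of_le_of_lt ?_ hq.2⟩
      apply hpk' _ _ (pkP i) (pkP j)
      show min (2*i+1) (n-1) ≤ min (2*j+1) (n-1)
      omega
  have K : ∀ i, ∀ p : Fin n, isV n p → (σ (pk i) < σ p ↔ (p:ℕ)/2 < Q i) := by
    intro i p hp
    constructor
    · intro h
      apply half_ge
      intro j hj
      have h1 : 2 * j ≤ p := by unfold isV at hp; omega
      have h3 := hp.2
      refine ⟨⟨2*j, by omega⟩, ?_, by simp only; omega⟩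
      simp only [Finset.mem_filter, Finset.mem_univ, true_and]
      have h4 : isV n (2*j) := ⟨by omega, by omega⟩
      refine ⟨h4, h.trans_le ?_⟩
      exact hv' _ _ h4 hp h1
    · intro h
      by_contra h'
      have : Q i ≤ (p:ℕ)/2 := by
        apply half_le
        · intro q hq
          simp only [Finset.mem_filter, Finset.mem_univ, true_and] at hq
          by_contra h2
          have h3 : p ≤ q := by
            show (p:ℕ) ≤ q
            have := hq.1
            unfold isV at this hp; omega
          exact h' (hq.2.trans_le (hv' p q hp hq.1 h3))
        · intro q hq q' hq'
          simp only [Finset.mem_filter, Finset.mem_univ, true_and] at hq hq'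
          exact injV q q' hq.1 hq'.1
      omega
  refine ⟨Q, hQ, ?_⟩
  intro p
  rw [← card_gt, card_split]
  unfold sQ
  split_ifs with hp
  · congr 1
    · apply le_antisymm
      · apply half_le
        · intro q hq
          simp only [Finset.mem_filter, Finset.mem_univ, true_and] at hq
          by_contra h2
          have h3 : p ≤ q := by
            show (p:ℕ) ≤ q
            have := hq.1
            unfold isV at this hp; omega
          exact (hv' p q hp hq.1 h3).not_gt hq.2
        · intro q hq q' hq'
          simp only [Finset.mem_filter, Finset.mem_univ, true_and] at hq hq'
          exact injV q q' hq.1 hq'.1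
      · apply half_ge
        intro j hj
        have h3 := hp.2
        have h4 : isV n (2*j) := ⟨by omega, by omega⟩
        refine ⟨⟨2*j, by omega⟩, ?_, by simp only; omega⟩
        simp only [Finset.mem_filter, Finset.mem_univ, true_and]
        refine ⟨h4, hv _ _ h4 hp ?_⟩
        show 2 * j < (p:ℕ)
        omega
    · have key : ∀ i < k, σ p < σ (pk i) ↔ i < rQ k Q ((p:ℕ)/2) := by
        intro i hi
        rw [rQ_spec (k := k) hQ _ _ hi, ← not_lt, ← K i p hp, not_lt]
        refine ⟨fun h => h.le, fun h => lt_of_le_of_ne h ?_⟩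
        intro h'
        have := σ.injective h'
        exact pkP i (this ▸ hp)
      apply le_antisymm
      · apply half_le
        · intro q hq
          simp only [Finset.mem_filter, Finset.mem_univ, true_and] at hq
          have := q.2
          rw [← key _ (by omega), pkq q hq.1]
          exact hq.2
        · intro q hq q' hq'
          simp only [Finset.mem_filter, Finset.mem_univ, true_and] at hq hq'
          exact injP q q' hq.1 hq'.1
      · apply half_ge
        intro j hj
        have hjk : j < k := hj.trans_le (rQ_le _ _ _)
        refine ⟨pk j, ?_, pkh j hjk⟩
        simp only [Finset.mem_filter, Finset.mem_univ, true_and]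
        exact ⟨pkP j, (key j hjk).2 hj⟩
  · rw [add_comm]
    congr 1
    · apply le_antisymm
      · apply half_le
        · intro q hq
          simp only [Finset.mem_filter, Finset.mem_univ, true_and] at hq
          by_contra h2
          have h3 : p ≤ q := by
            by_contra h4
            have h4 : q < p := not_le.1 h4
            have h5 : (q:ℕ) < p := h4
            have := injP q p hq.1 hp (by omega)
            exact h4.ne this
          exact (hpk' p q hp hq.1 h3).not_gt hq.2
        · intro q hq q' hq'
          simp only [Finset.mem_filter, Finset.mem_univ, true_and] at hq hq'
          exact injP q q' hq.1 hq'.1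
      · apply half_ge
        intro j hj
        have hp2 := p.2
        refine ⟨pk j, ?_, pkh j (by omega)⟩
        simp only [Finset.mem_filter, Finset.mem_univ, true_and]
        refine ⟨pkP j, hpk _ _ (pkP j) hp ?_⟩
        show min (2*j+1) (n-1) < (p:ℕ)
        omega
    · simp only [hQd]
      rw [pkq p hp]

open Pointwise in
theorem part2 (n : ℕ) (hn : 1 ≤ n) :
    Filter.Tendsto
      (fun m : ℕ =>
        (Set.ncard {x : Fin n × Fin n → ℤ |
            (fun p => (x p : ℝ)) ∈ (m : ℝ) • Balt123 n} : ℝ) /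
          (m : ℝ) ^ (((n + 1) / 2).choose 2))
      Filter.atTop
      (nhds (1 / ∏ i ∈ Finset.Icc 1 ((n + 1) / 2 - 1),
        ((2 * i - 1 : ℕ) : ℝ) ^ ((n + 1) / 2 - i))) := by
  obtain ⟨k, hk⟩ : ∃ k, k = (n+1)/2 := ⟨_, rfl⟩
  rw [← hk]
  have hT := TSet_tendsto R2 R2_irrefl (Stair (k-1)) (low2 (k-1)) _ (W2_rec (k-1))
  rw [W2_eval, Stair_card, show k - 1 + 1 = k by omega] at hT
  refine hT.congr' ?_
  filter_upwards [Filter.eventually_gt_atTop 0] with m hm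
  have := ncard_lattice R2 (Stair (k-1)) (permMatrix '' AltAv123 n) (M2 n k) ?_ ?_ (M2_h3 hk) ?_ m hm
  · unfold Balt123
    rw [this]
  · rintro _ ⟨σ, hσ, rfl⟩
    obtain ⟨Q, hQ, h⟩ := exists_Q2 hn hk hσ
    refine ⟨tQ k Q, tQ_mem hQ, ?_⟩
    funext p
    rw [M2_apply hk hQ, permMatrix, ← h]
    apply if_congr ?_ rfl rfl
    have := (σ p.1).2
    have := p.2.2
    rw [Fin.ext_iff]; omega
  · intro t ht
    obtain ⟨Q, hQ, rfl⟩ := exists_Q ht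
    obtain ⟨σ, hσ, h⟩ := exists_perm2 hk hQ
    refine ⟨σ, hσ, ?_⟩
    funext p
    rw [M2_apply hk hQ, permMatrix, ← h]
    apply if_congr ?_ rfl rfl
    have := (σ p.1).2
    have := p.2.2
    rw [Fin.ext_iff]; omega
  · rintro _ ⟨σ, hσ, rfl⟩ p
    unfold permMatrix
    split_ifs
    · exact ⟨1, by simp⟩
    · exact ⟨0, by simp⟩
end BP

theorem stmt19 (n : ℕ) (hn : 1 ≤ n) :
    Filter.Tendsto
      (fun m : ℕ =>
        (Set.ncard {x : Fin n × Fin n → ℤ |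
            (fun p => (x p : ℝ)) ∈ (m : ℝ) • B132312 n} : ℝ) / (m : ℝ) ^ (n.choose 2))
      Filter.atTop
      (nhds ((∏ i ∈ Finset.Icc 1 (n - 1), (Nat.factorial (i - 1) : ℝ)) /
        (∏ i ∈ Finset.Icc 1 (n - 1), (Nat.factorial (2 * i - 1) : ℝ)))) ∧
    Filter.Tendsto
      (fun m : ℕ =>
        (Set.ncard {x : Fin n × Fin n → ℤ |
            (fun p => (x p : ℝ)) ∈ (m : ℝ) • Balt123 n} : ℝ) /
          (m : ℝ) ^ (((n + 1) / 2).choose 2))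
      Filter.atTop
      (nhds (1 / ∏ i ∈ Finset.Icc 1 ((n + 1) / 2 - 1),
        ((2 * i - 1 : ℕ) : ℝ) ^ ((n + 1) / 2 - i))) := by
  exact ⟨BP.part1 n hn, BP.part2 n hn⟩
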